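/- arXiv:2506.18447 — 2 statements merged into one kernel-verified Lean document; each statement's English description precedes it below -/
import Mathlib

section
/- Let Φ = {f_1,…,f_N} be an iterated function system of contracting similarities on ℝ^d with ratios λ_1,…,λ_N satisfying the open set condition, let p be a probability vector with all p_i > 0, let 0 < α < −log p_min, and let ℓ : ℕ → ℕ be monotone increasing with liminf_{n→∞} ℓ(n)/log n = 1/α. Then for ℙ_p-almost every ō ∈ Σ, the Hausdorff dimension of the complement Λ ∖ R(ō,ℓ) equals inf_{q<0} P_α(q). -/
/-!
Throughout, the pressure sum is `∑ i, lam i ^ s * (p i * exp a) ^ q`.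

Upper bound. Fix `a < α`. Splitting the time interval up to `e^{αm}` into disjoint windows of
length `m` and applying Borel–Cantelli, a typical orbit sees, before the lengths `ℓ n` exceed `m`,
every word of length `m` of probability at least `e^{-am}`; this works along a sparse sequence of
lengths `m` furnished by the lower limit of `ℓ n / log n` (`exists_lengths`). For a code that is
not covered, all sufficiently long prefixes of these lengths `m` therefore have probability below
`e^{-am}`. Covering the images of these codes by cylinders and applying Markov's inequality with
an exponent `q < 0` bounds the dimension by every `s` for which the pressure sum at `s, a, q` is
smaller than `1` (`dimH_rare_le`).

Lower bound. Fix `s` below the infimum of `P` on the negative axis. A convexity argument in `q`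
gives `ε > 0` and, for large `n`, many words of length `n` with probability at most `e^{-(α+ε)n}`,
many meaning that their weights `lam_w ^ s` have a large sum (`exists_rich_words`). The open set
condition yields a word `u` such that a code containing `u` after its first symbol never shares
its image with a code starting differently (`exists_separating_word`). Concatenating blocks `wu`,
with `w` running over the rich words, gives a self-similar subset of `Λ` whose points have a
unique code, carrying a natural Bernoulli measure of exponent at least `s`. Each fixed code built
from such blocks is almost surely covered only finitely often, by Borel–Cantelli, so by Fubini
almost every orbit leaves almost all of this subset uncovered, and the mass distribution principle
(`mass_distribution`) concludes (`ae_le_dimH`).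

The two bounds are tied to `P` by `exists_pressure_sum_lt` and `one_lt_pressure_sum`, and a
countable intersection over `s` tending to the infimum gives the equality.
-/

open MeasureTheory Filter Topology Set ENNReal

noncomputable section

/-- The cylinder set in `{1,…,N}^ℕ` determined by a finite word `w` of length `m`. -/
def cylinder {N m : ℕ} (w : Fin m → Fin N) : Set (ℕ → Fin N) :=
  {x | ∀ j : Fin m, x (j : ℕ) = w j}

/-- The product `r_{w 0} ⋯ r_{w (m-1)}` of weights along a finite word `w`. -/
def wordProd {N : ℕ} (r : Fin N → ℝ) {m : ℕ} (w : Fin m → Fin N) : ℝ :=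
  ∏ j, r (w j)

/-- The composition `f_{x 0} ∘ f_{x 1} ∘ ⋯ ∘ f_{x (n-1)}` of the maps along
the first `n` symbols of `x`; the coding map is `π x = lim_n prefixMap f x n 0`. -/
def prefixMap {N : ℕ} {E : Type*} (f : Fin N → E → E) (x : ℕ → Fin N) : ℕ → E → E
  | 0 => id
  | n + 1 => fun y => f (x 0) (prefixMap f (fun k => x (k + 1)) n y)

/-- The symbolic limsup set `⋂ₖ ⋃_{n ≥ k} [(σⁿ ō)|_{ℓ(n)}]`; its image under the
coding map `π` is the dynamical covering set `R(ō, ℓ)`. -/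
def limsupCylinders {N : ℕ} (ℓ : ℕ → ℕ) (o : ℕ → Fin N) : Set (ℕ → Fin N) :=
  ⋂ k, ⋃ n, ⋃ _ : k ≤ n, cylinder (fun j : Fin (ℓ n) => o (n + (j : ℕ)))

/-- `m(n) = ⌊#{k ∈ ℕ : ℓ(k) = n}/n⌋`. -/
def countM (ℓ : ℕ → ℕ) (n : ℕ) : ℕ := Nat.card {k : ℕ | ℓ k = n} / n

/-- The probabilistic pressure
`L(s) = limsup_n (1/n) log Σ_{|ȷ|=n} λ_ȷ^s (1 − (1 − p_ȷ)^{m(n)})`. -/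
def pressL {N : ℕ} (lam p : Fin N → ℝ) (m : ℕ → ℕ) (s : ℝ) : ℝ :=
  Filter.limsup (fun n : ℕ => Real.log (∑ w : Fin n → Fin N,
    wordProd lam w ^ s * (1 - (1 - wordProd p w) ^ m n)) / (n : ℝ)) atTop


/-! ### Geometry of the coding map -/

/-- The product `r (x 0) ⋯ r (x (n - 1))` of weights along the first `n` symbols of `x`. -/
def seqProd {N : ℕ} (r : Fin N → ℝ) (x : ℕ → Fin N) (n : ℕ) : ℝ :=
  ∏ j ∈ Finset.range n, r (x j)

lemma wordProd_eq_seqProd {N : ℕ} (r : Fin N → ℝ) (x : ℕ → Fin N) (n : ℕ) :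
    wordProd r (fun j : Fin n => x j) = seqProd r x n := by
  simp [wordProd, seqProd, Finset.prod_range]

lemma seqProd_pos {N : ℕ} {r : Fin N → ℝ} (hr : ∀ i, 0 < r i) (x : ℕ → Fin N) (n : ℕ) :
    0 < seqProd r x n := Finset.prod_pos fun _ _ => hr _

lemma seqProd_add {N : ℕ} (r : Fin N → ℝ) (x : ℕ → Fin N) (m n : ℕ) :
    seqProd r x (m + n) = seqProd r x m * seqProd r (fun k => x (m + k)) n := by
  simp [seqProd, Finset.prod_range_add]

lemma seqProd_succ' {N : ℕ} (r : Fin N → ℝ) (x : ℕ → Fin N) (n : ℕ) :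
    seqProd r x (n + 1) = r (x 0) * seqProd r (fun k => x (k + 1)) n := by
  simp [seqProd, Finset.prod_range_succ', mul_comm]

lemma seqProd_congr {N : ℕ} (r : Fin N → ℝ) {x y : ℕ → Fin N} {n : ℕ}
    (h : ∀ j < n, x j = y j) : seqProd r x n = seqProd r y n :=
  Finset.prod_congr rfl fun j hj => by rw [h j (Finset.mem_range.1 hj)]

/-- The contraction ratios are uniformly bounded away from `1`. -/
lemma exists_lam_bound {N : ℕ} [NeZero N] {lam : Fin N → ℝ}
    (hlam : ∀ i, lam i ∈ Set.Ioo (0 : ℝ) 1) :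
    ∃ b : ℝ, 0 < b ∧ b < 1 ∧ ∀ i, lam i ≤ b := by
  obtain ⟨i, hi⟩ := Finite.exists_max lam
  exact ⟨lam i, (hlam i).1, (hlam i).2, hi⟩

lemma seqProd_le_pow {N : ℕ} {lam : Fin N → ℝ} (h0 : ∀ i, 0 < lam i) {b : ℝ}
    (hb : ∀ i, lam i ≤ b) (x : ℕ → Fin N) (n : ℕ) : seqProd lam x n ≤ b ^ n := by
  calc seqProd lam x n ≤ ∏ _j ∈ Finset.range n, b :=
        Finset.prod_le_prod (fun _ _ => (h0 _).le) (fun _ _ => hb _)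
    _ = b ^ n := by simp

lemma prefixMap_congr {N : ℕ} {E : Type*} (f : Fin N → E → E) {x y : ℕ → Fin N} {n : ℕ}
    (h : ∀ j < n, x j = y j) : prefixMap f x n = prefixMap f y n := by
  induction n generalizing x y with
  | zero => rfl
  | succ n ih =>
    funext z
    have h1 := ih (x := fun k => x (k + 1)) (y := fun k => y (k + 1))
      (fun j hj => h (j + 1) (by omega))
    simp only [prefixMap, h 0 (by omega), h1]

lemma prefixMap_mem {N : ℕ} {E : Type*} {f : Fin N → E → E} {Λ : Set E} (hΛ : ∀ i, ∀ y ∈ Λ, f i y ∈ Λ) (x : ℕ → Fin N) (n : ℕ) {y : E}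
    (hy : y ∈ Λ) : prefixMap f x n y ∈ Λ := by
  induction n generalizing x with
  | zero => exact hy
  | succ n ih => exact hΛ _ _ (ih _)

section Coding

variable {N : ℕ} {E : Type*} [MetricSpace E] {lam : Fin N → ℝ} {f : Fin N → E → E}

lemma dist_prefixMap (hf : ∀ i x y, dist (f i x) (f i y) = lam i * dist x y)
    (x : ℕ → Fin N) (n : ℕ) (y z : E) :
    dist (prefixMap f x n y) (prefixMap f x n z) = seqProd lam x n * dist y z := by
  induction n generalizing x with
  | zero => simp [prefixMap, seqProd]
  | succ n ih => rw [seqProd_succ', mul_assoc, ← ih, ← hf]; rfl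

lemma prefixMap_injective (hlam : ∀ i, 0 < lam i)
    (hf : ∀ i x y, dist (f i x) (f i y) = lam i * dist x y)
    (x : ℕ → Fin N) (n : ℕ) : Function.Injective (prefixMap f x n) := by
  intro y z h
  have h1 := dist_prefixMap hf x n y z
  rw [h, dist_self] at h1
  have := seqProd_pos hlam x n
  exact dist_eq_zero.1 ((mul_eq_zero.1 h1.symm).resolve_left this.ne')

lemma continuous_of_similarity (hf : ∀ i x y, dist (f i x) (f i y) = lam i * dist x y)
    (hlam : ∀ i, 0 < lam i) (i : Fin N) : Continuous (f i) :=
  (LipschitzWith.of_dist_le_mul (K := ⟨lam i, (hlam i).le⟩)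
    (fun x y => (hf i x y).le)).continuous

lemma continuous_prefixMap (hf : ∀ i x y, dist (f i x) (f i y) = lam i * dist x y)
    (hlam : ∀ i, 0 < lam i) (x : ℕ → Fin N) (n : ℕ) : Continuous (prefixMap f x n) :=
  (LipschitzWith.of_dist_le_mul (K := ⟨seqProd lam x n, (seqProd_pos hlam x n).le⟩)
    (fun y z => (dist_prefixMap hf x n y z).le)).continuous

variable {e : E} {π : (ℕ → Fin N) → E}

lemma coding_succ (hf : ∀ i x y, dist (f i x) (f i y) = lam i * dist x y)
    (hlam : ∀ i, 0 < lam i)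
    (hπ : ∀ x, Tendsto (fun n => prefixMap f x n e) atTop (𝓝 (π x))) (x : ℕ → Fin N) :
    π x = f (x 0) (π fun k => x (k + 1)) := by
  have h1 := (hπ x).comp (tendsto_add_atTop_nat 1)
  have h2 := ((continuous_of_similarity hf hlam (x 0)).tendsto _).comp (hπ fun k => x (k + 1))
  exact tendsto_nhds_unique h1 h2

lemma coding_eq_prefixMap (hf : ∀ i x y, dist (f i x) (f i y) = lam i * dist x y)
    (hlam : ∀ i, 0 < lam i)
    (hπ : ∀ x, Tendsto (fun n => prefixMap f x n e) atTop (𝓝 (π x))) (x : ℕ → Fin N) (n : ℕ) :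
    π x = prefixMap f x n (π fun k => x (n + k)) := by
  induction n generalizing x with
  | zero => simp [prefixMap]
  | succ n ih =>
    rw [coding_succ hf hlam hπ, ih]
    simp only [prefixMap]
    congr 4
    funext k
    congr 1
    omega

/-- Points with equal images keep equal images after a common prefix is removed. -/
lemma coding_shift_eq (hf : ∀ i x y, dist (f i x) (f i y) = lam i * dist x y)
    (hlam : ∀ i, 0 < lam i)
    (hπ : ∀ x, Tendsto (fun n => prefixMap f x n e) atTop (𝓝 (π x))) {x y : ℕ → Fin N} {n : ℕ}
    (h : ∀ j < n, x j = y j) (hxy : π x = π y) :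
    (π fun k => x (n + k)) = π fun k => y (n + k) := by
  rw [coding_eq_prefixMap hf hlam hπ x n, coding_eq_prefixMap hf hlam hπ y n, prefixMap_congr f h] at hxy
  exact prefixMap_injective hlam hf y n hxy

lemma dist_coding (hf : ∀ i x y, dist (f i x) (f i y) = lam i * dist x y)
    (hlam : ∀ i, 0 < lam i)
    (hπ : ∀ x, Tendsto (fun n => prefixMap f x n e) atTop (𝓝 (π x))) {x y : ℕ → Fin N} {n : ℕ}
    (h : ∀ j < n, x j = y j) :
    dist (π x) (π y)
      = seqProd lam x n * dist (π fun k => x (n + k)) (π fun k => y (n + k)) := by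
  rw [coding_eq_prefixMap hf hlam hπ x n, coding_eq_prefixMap hf hlam hπ y n, ← prefixMap_congr f h,
    dist_prefixMap hf]

lemma tendsto_seqProd [NeZero N] (hlam : ∀ i, lam i ∈ Set.Ioo (0 : ℝ) 1) (x : ℕ → Fin N) :
    Tendsto (fun n => seqProd lam x n) atTop (𝓝 0) := by
  obtain ⟨b, hb0, hb1, hb⟩ := exists_lam_bound hlam
  exact squeeze_zero (fun n => (seqProd_pos (fun i => (hlam i).1) x n).le)
    (fun n => seqProd_le_pow (fun i => (hlam i).1) hb x n)
    (tendsto_pow_atTop_nhds_zero_of_lt_one hb0.le hb1)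

lemma coding_mem [NeZero N] (hlam : ∀ i, lam i ∈ Set.Ioo (0 : ℝ) 1)
    (hf : ∀ i x y, dist (f i x) (f i y) = lam i * dist x y)
    (hπ : ∀ x, Tendsto (fun n => prefixMap f x n e) atTop (𝓝 (π x)))
    {Λ : Set E} (hne : Λ.Nonempty) (hcl : IsClosed Λ) (hΛ : Λ = ⋃ i, f i '' Λ) (x : ℕ → Fin N) :
    π x ∈ Λ := by
  obtain ⟨y, hy⟩ := hne
  have hinv : ∀ i, ∀ y ∈ Λ, f i y ∈ Λ := fun i y hy => by
    rw [hΛ]; exact mem_iUnion.2 ⟨i, mem_image_of_mem _ hy⟩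
  have hd : Tendsto (fun n => dist (prefixMap f x n e) (prefixMap f x n y)) atTop (𝓝 0) := by
    simp only [dist_prefixMap hf]
    simpa using (tendsto_seqProd hlam x).mul_const (dist e y)
  have h2 : Tendsto (fun n => prefixMap f x n y) atTop (𝓝 (π x)) :=
    (tendsto_iff_of_dist hd).1 (hπ x)
  exact hcl.mem_of_tendsto h2 (Eventually.of_forall fun n => prefixMap_mem hinv x n hy)

/-- Every point of the attractor has a code. -/
lemma coding_surj [NeZero N] (hlam : ∀ i, lam i ∈ Set.Ioo (0 : ℝ) 1)
    (hf : ∀ i x y, dist (f i x) (f i y) = lam i * dist x y)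
    (hπ : ∀ x, Tendsto (fun n => prefixMap f x n e) atTop (𝓝 (π x)))
    {Λ : Set E} (hb : Bornology.IsBounded Λ) (hΛ : Λ = ⋃ i, f i '' Λ) {z : E} (hz : z ∈ Λ) :
    ∃ x, π x = z := by
  have hstep : ∀ z : Λ, ∃ q : Fin N × Λ, f q.1 q.2 = z := by
    rintro ⟨z, hz⟩
    rw [hΛ] at hz
    obtain ⟨i, y, hy, rfl⟩ := mem_iUnion.1 hz
    exact ⟨(i, ⟨y, hy⟩), rfl⟩
  choose g hg using hstep
  -- `g` picks a preimage branch; iterating it reads off a code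
  let z₀ : Λ := ⟨z, hz⟩
  let T : Λ → Λ := fun z => (g z).2
  have key : ∀ n (z : Λ), prefixMap f (fun k => (g (T^[k] z)).1) n (T^[n] z : Λ) = z := by
    intro n
    induction n with
    | zero => intro z; rfl
    | succ n ih =>
      intro z
      have := ih (T z)
      simp only [prefixMap, Function.iterate_succ, Function.comp_apply, Function.iterate_zero,
        id] at this ⊢
      rw [this]
      exact hg z
  refine ⟨fun k => (g (T^[k] z₀)).1, ?_⟩
  set x : ℕ → Fin N := fun k => (g (T^[k] z₀)).1
  obtain ⟨C, hC⟩ := hb.subset_closedBall e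
  have hd : Tendsto (fun n => dist (prefixMap f x n e) z) atTop (𝓝 0) := by
    refine squeeze_zero (fun _ => dist_nonneg) (g := fun n => seqProd lam x n * C) ?_
      (by simpa using (tendsto_seqProd hlam x).mul_const C)
    intro n
    have h1 : prefixMap f x n (T^[n] z₀ : Λ) = z := key n z₀
    conv_lhs => rw [← h1]
    rw [dist_prefixMap hf]
    have := hC (T^[n] z₀).2
    rw [Metric.mem_closedBall'] at this
    exact mul_le_mul_of_nonneg_left this (seqProd_pos (fun i => (hlam i).1) x n).le
  exact tendsto_nhds_unique (hπ x) (tendsto_iff_dist_tendsto_zero.2 hd)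

end Coding

/-! ### Words of large probability are seen by a typical orbit -/

lemma measurableSet_cylinder' {N m : ℕ} (w : Fin m → Fin N) (n : ℕ) :
    MeasurableSet {o : ℕ → Fin N | ∀ j : Fin m, o (n + j) = w j} := by
  have h : {o : ℕ → Fin N | ∀ j : Fin m, o (n + j) = w j}
      = ⋂ j : Fin m, (fun o : ℕ → Fin N => o (n + j)) ⁻¹' {w j} := by
    ext o; simp
  rw [h]
  exact MeasurableSet.iInter fun j =>
    (measurable_pi_apply (n + (j : ℕ))) (measurableSet_singleton (w j))

section Bernoulli

variable {N : ℕ} {p : Fin N → ℝ} {μ : Measure (ℕ → Fin N)} [IsProbabilityMeasure μ]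

lemma wordProd_nonneg (hp : ∀ i, 0 < p i) {m : ℕ} (w : Fin m → Fin N) : 0 ≤ wordProd p w :=
  Finset.prod_nonneg fun _ _ => (hp _).le

lemma measureReal_eq_sum_cylinder (n : ℕ) {T : Set (ℕ → Fin N)} (hT : MeasurableSet T) :
    μ.real T = ∑ a : Fin n → Fin N, μ.real (T ∩ cylinder a) := by
  rw [← measureReal_biUnion_finset]
  · congr 1
    ext x
    simp only [mem_iUnion, Finset.mem_univ, mem_inter_iff, exists_prop, true_and]
    exact ⟨fun hx => ⟨fun j => x j, hx, fun j => rfl⟩, fun ⟨_, hx, _⟩ => hx⟩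
  · intro a _ b _ hab
    refine Set.disjoint_left.2 fun x hx hx' => hab ?_
    funext j
    rw [← hx.2 j, hx'.2 j]
  · intro a _
    have := measurableSet_cylinder' a 0
    simp only [zero_add] at this
    exact hT.inter this

/-- An event depending on the first `n` symbols is independent of the word read at position `n`. -/
lemma measureReal_inter_window (hp : ∀ i, 0 < p i)
    (hμ : ∀ (m : ℕ) (w : Fin m → Fin N), μ (cylinder w) = ENNReal.ofReal (wordProd p w))
    (n m : ℕ) (w : Fin m → Fin N) {S : Set (ℕ → Fin N)} (hS : MeasurableSet S)
    (hSd : ∀ x y, (∀ j < n, x j = y j) → x ∈ S → y ∈ S) :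
    μ.real (S ∩ {o | ∀ j : Fin m, o (n + j) = w j}) = μ.real S * wordProd p w := by
  have hc : ∀ (m : ℕ) (w : Fin m → Fin N), μ.real (cylinder w) = wordProd p w := fun m w => by
    rw [measureReal_def, hμ, ENNReal.toReal_ofReal (wordProd_nonneg hp w)]
  rw [measureReal_eq_sum_cylinder n (hS.inter (measurableSet_cylinder' w n)),
    measureReal_eq_sum_cylinder n hS, Finset.sum_mul]
  refine Finset.sum_congr rfl fun a _ => ?_
  by_cases h : (S ∩ cylinder a).Nonempty
  · obtain ⟨x, hx, hxa⟩ := h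
    have hsub : cylinder a ⊆ S := fun y hy =>
      hSd x y (fun j hj => by rw [hxa ⟨j, hj⟩, ← hy ⟨j, hj⟩]) hx
    have h1 : S ∩ {o | ∀ j : Fin m, o (n + j) = w j} ∩ cylinder a
        = cylinder (Fin.append a w) := by
      ext y
      constructor
      · rintro ⟨⟨_, hy⟩, hya⟩ j
        induction j using Fin.addCases with
        | left i => simpa using hya i
        | right i => simpa using hy i
      · intro hy
        have hya : y ∈ cylinder a := fun j => by simpa using hy (Fin.castAdd m j)
        exact ⟨⟨hsub hya, fun j => by simpa using hy (Fin.natAdd n j)⟩, hya⟩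
    rw [h1, inter_eq_right.2 hsub, hc, hc]
    simp [wordProd, Fin.prod_univ_add]
  · rw [not_nonempty_iff_eq_empty] at h
    have h1 : S ∩ {o | ∀ j : Fin m, o (n + j) = w j} ∩ cylinder a = ∅ := by
      rw [inter_right_comm, h, empty_inter]
    rw [h1, h]
    simp

lemma measureReal_window (hp : ∀ i, 0 < p i)
    (hμ : ∀ (m : ℕ) (w : Fin m → Fin N), μ (cylinder w) = ENNReal.ofReal (wordProd p w))
    (n m : ℕ) (w : Fin m → Fin N) :
    μ.real {o | ∀ j : Fin m, o (n + j) = w j} = wordProd p w := by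
  have := measureReal_inter_window hp hμ n m w (S := univ) .univ (fun _ _ _ _ => trivial)
  simpa using this

/-- A given word is missed at `M` disjoint windows with probability `(1 - p_w) ^ M`. -/
lemma measureReal_miss (hp : ∀ i, 0 < p i)
    (hμ : ∀ (m : ℕ) (w : Fin m → Fin N), μ (cylinder w) = ENNReal.ofReal (wordProd p w))
    (k m : ℕ) (w : Fin m → Fin N) (M : ℕ) :
    μ.real {o | ∀ i < M, ¬ ∀ j : Fin m, o (k + i * m + j) = w j} = (1 - wordProd p w) ^ M := by
  induction M with
  | zero => simp
  | succ M ih =>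
    set S : Set (ℕ → Fin N) := {o | ∀ i < M, ¬ ∀ j : Fin m, o (k + i * m + j) = w j} with hSdef
    have hS : MeasurableSet S := by
      have : S = ⋂ i, ⋂ (_ : i < M), {o | ∀ j : Fin m, o (k + i * m + j) = w j}ᶜ := by
        ext o; simp [hSdef]
      rw [this]
      exact MeasurableSet.iInter fun i => MeasurableSet.iInter fun _ =>
        (measurableSet_cylinder' w _).compl
    have h1 := measureReal_inter_window hp hμ (k + M * m) m w hS (by
      intro x y hxy hx i hi hy
      refine hx i hi fun j => ?_
      rw [← hy j]
      refine hxy _ ?_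
      have : i * m + m ≤ M * m := by nlinarith
      have := j.2
      omega)
    have h2 := measureReal_inter_add_sdiff (μ := μ) (s := S)
      (measurableSet_cylinder' w (k + M * m))
    have h3 : {o | ∀ i < M + 1, ¬ ∀ j : Fin m, o (k + i * m + j) = w j}
        = S \ {o | ∀ j : Fin m, o (k + M * m + j) = w j} := by
      ext o
      constructor
      · intro h
        exact ⟨fun i hi => h i (by omega), h M (by omega)⟩
      · rintro ⟨h, h'⟩ i hi
        rcases Nat.lt_succ_iff_lt_or_eq.1 hi with hi | rfl
        · exact h i hi
        · exact h'
    rw [h3, pow_succ, ← ih]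
    linarith

/-- The probability that some word of length `m` and probability at least `c` is missed at all
positions in `[k, n]`. -/
lemma measureReal_bad_le (hp : ∀ i, 0 < p i) (hpsum : ∑ i, p i = 1)
    (hμ : ∀ (m : ℕ) (w : Fin m → Fin N), μ (cylinder w) = ENNReal.ofReal (wordProd p w))
    (k m n M : ℕ) (h : k + M * m ≤ n) (c : ℝ) :
    μ.real {o | ∃ w : Fin m → Fin N, c ≤ wordProd p w ∧
      ∀ i, k ≤ i → i ≤ n → ¬ ∀ j : Fin m, o (i + j) = w j}
      ≤ (N : ℝ) ^ m * Real.exp (-c * M) := by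
  have hp1 : ∀ i, p i ≤ 1 := fun i => by
    rw [← hpsum]; exact Finset.single_le_sum (fun j _ => (hp j).le) (Finset.mem_univ i)
  classical
  have hsub : {o : ℕ → Fin N | ∃ w : Fin m → Fin N, c ≤ wordProd p w ∧
      ∀ i, k ≤ i → i ≤ n → ¬ ∀ j : Fin m, o (i + j) = w j}
      ⊆ ⋃ w ∈ (Finset.univ.filter fun w : Fin m → Fin N => c ≤ wordProd p w),
        {o : ℕ → Fin N | ∀ i < M, ¬ ∀ j : Fin m, o (k + i * m + j) = w j} := by
    rintro o ⟨w, hw, ho⟩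
    simp only [mem_iUnion]
    refine ⟨w, by simpa using hw, fun i hi => ho _ (by omega) ?_⟩
    have : i * m ≤ M * m := Nat.mul_le_mul_right _ hi.le
    omega
  calc _ ≤ _ := measureReal_mono hsub (measure_ne_top _ _)
    _ ≤ _ := measureReal_biUnion_finset_le _ _
    _ ≤ ∑ w ∈ (Finset.univ.filter fun w : Fin m → Fin N => c ≤ wordProd p w),
          Real.exp (-c * M) := by
        refine Finset.sum_le_sum fun w hw => ?_
        rw [measureReal_miss hp hμ]
        have hw : c ≤ wordProd p w := by simpa using hw
        have hw1 : wordProd p w ≤ 1 := Finset.prod_le_one (fun _ _ => (hp _).le) fun _ _ => hp1 _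
        calc (1 - wordProd p w) ^ M ≤ (Real.exp (-c)) ^ M := by
              refine pow_le_pow_left₀ (by linarith) ?_ _
              have := Real.one_sub_le_exp_neg (wordProd p w)
              exact this.trans (Real.exp_le_exp.2 (by linarith))
          _ = _ := by rw [← Real.exp_nat_mul]; ring_nf
    _ ≤ ∑ w : Fin m → Fin N, Real.exp (-c * M) :=
        Finset.sum_le_sum_of_subset_of_nonneg (Finset.filter_subset _ _)
          fun _ _ _ => (Real.exp_pos _).le
    _ = _ := by simp

end Bernoulli

/-! ### Reading off the growth of `ℓ` from the lower limit -/

section Growth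

variable {α : ℝ} {ℓ : ℕ → ℕ}

/-- An unbounded sequence of eventual lower bounds would give the junk value `0` for `liminf`,
so the hypothesis forces boundedness. -/
lemma bddAbove_of_liminf (hα : 0 < α)
    (hℓ : Filter.liminf (fun n : ℕ => (ℓ n : ℝ) / Real.log n) Filter.atTop = 1 / α) :
    BddAbove {a : ℝ | ∀ᶠ n : ℕ in atTop, a ≤ (ℓ n : ℝ) / Real.log n} := by
  by_contra h
  rw [Filter.liminf_eq, Real.sSup_of_not_bddAbove h] at hℓ
  have : 0 < 1 / α := by positivity
  linarith

lemma frequently_lt_of_liminf (hα : 0 < α)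
    (hℓ : Filter.liminf (fun n : ℕ => (ℓ n : ℝ) / Real.log n) Filter.atTop = 1 / α)
    {b : ℝ} (hb : 0 < b) (hbα : b < α) :
    ∃ᶠ n : ℕ in atTop, (ℓ n : ℝ) / Real.log n < 1 / b := by
  intro h
  simp only [not_lt] at h
  have h1 := le_csSup (bddAbove_of_liminf hα hℓ) h
  rw [← Filter.liminf_eq, hℓ] at h1
  exact absurd (one_div_lt_one_div_of_lt hb hbα) (not_lt.2 h1)

lemma eventually_le_of_liminf (hα : 0 < α)
    (hℓ : Filter.liminf (fun n : ℕ => (ℓ n : ℝ) / Real.log n) Filter.atTop = 1 / α)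
    {c : ℝ} (hc : α < c) :
    ∀ᶠ n : ℕ in atTop, Real.log n ≤ c * ℓ n := by
  have hlt : 1 / c < sSup {a : ℝ | ∀ᶠ n : ℕ in atTop, a ≤ (ℓ n : ℝ) / Real.log n} := by
    rw [← Filter.liminf_eq, hℓ]
    exact one_div_lt_one_div_of_lt hα hc
  obtain ⟨a, ha, hca⟩ := exists_lt_of_lt_csSup
    ⟨0, by filter_upwards [eventually_ge_atTop 1] with n hn
           exact div_nonneg (by positivity) (Real.log_nonneg (by exact_mod_cast hn))⟩ hlt
  filter_upwards [ha, eventually_ge_atTop 2] with n hn hn2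
  have hlog : 0 < Real.log n := Real.log_pos (by exact_mod_cast hn2)
  have h1 := hca.le.trans hn
  rw [div_le_div_iff₀ (hα.trans hc) hlog] at h1
  linarith

lemma tendsto_of_liminf (hα : 0 < α)
    (hℓ : Filter.liminf (fun n : ℕ => (ℓ n : ℝ) / Real.log n) Filter.atTop = 1 / α) :
    Tendsto ℓ atTop atTop := by
  have h1 := eventually_le_of_liminf hα hℓ (c := α + 1) (by linarith)
  have h2 : Tendsto (fun n : ℕ => (α + 1) * (ℓ n : ℝ)) atTop atTop :=
    tendsto_atTop_mono' _ h1 (Real.tendsto_log_atTop.comp tendsto_natCast_atTop_atTop)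
  exact tendsto_natCast_atTop_iff.1 ((tendsto_const_mul_atTop_of_pos (by linarith)).1 h2)

end Growth

/-- The bound of `measureReal_bad_le` with `M = ⌊(n - k) / m⌋` is small once `m` is large. -/
lemma eventually_bad_small (N k : ℕ) (hN : 2 ≤ N) {a b : ℝ} (ha : 0 < a) (hab : a < b) {ε : ℝ}
    (hε : 0 < ε) :
    ∀ᶠ m : ℕ in atTop, ∀ n : ℕ, Real.exp (b * m) ≤ n → k ≤ n →
      (N : ℝ) ^ m * Real.exp (-Real.exp (-a * m) * ((n - k) / m : ℕ)) ≤ ε := by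
  have hNpos : (0 : ℝ) < N := by positivity
  have hβ : 0 < b - a := by linarith
  have h1 : ∀ᶠ m : ℕ in atTop, (Real.log N + 1) ≤ Real.exp ((b - a) * m) / (m : ℝ) ^ 2 := by
    have := (tendsto_exp_mul_div_rpow_atTop 2 (b - a) hβ).comp tendsto_natCast_atTop_atTop
    filter_upwards [this.eventually_ge_atTop (Real.log N + 1)] with m hm
    simpa using hm
  have h2 : ∀ᶠ m : ℕ in atTop, Real.exp (k + 1 - m) ≤ ε := by
    have : Tendsto (fun m : ℕ => (k + 1 - m : ℝ)) atTop atBot :=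
      tendsto_atBot_add_const_left _ _ (tendsto_neg_atTop_atBot.comp tendsto_natCast_atTop_atTop)
    exact (Real.tendsto_exp_atBot.comp this).eventually_le_const hε
  filter_upwards [h1, h2, eventually_ge_atTop 1] with m hm1 hm2 hm n hn hkn
  have hm0 : (0 : ℝ) < m := by exact_mod_cast hm
  have hm1' : (1 : ℝ) ≤ m := by exact_mod_cast hm
  refine le_trans ?_ hm2
  have hM : ((n : ℝ) - k) / m - 1 ≤ ((n - k) / m : ℕ) := by
    have := Nat.lt_div_mul_add (a := n - k) (b := m) hm
    have h3 : ((n - k : ℕ) : ℝ) < ((n - k) / m : ℕ) * m + m := by exact_mod_cast this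
    rw [Nat.cast_sub hkn] at h3
    rw [sub_le_iff_le_add, div_le_iff₀ hm0]
    linarith
  rw [← Real.exp_log hNpos, ← Real.exp_nat_mul, ← Real.exp_add]
  refine Real.exp_le_exp.2 ?_
  set q := Real.exp (-a * m) with hq
  have hq0 : 0 < q := Real.exp_pos _
  have hq1 : q ≤ 1 := Real.exp_le_one_iff.2 (by nlinarith)
  have h4 : q * (((n : ℝ) - k) / m - 1) ≤ q * ((n - k) / m : ℕ) :=
    mul_le_mul_of_nonneg_left hM hq0.le
  have h5 : Real.exp ((b - a) * m) ≤ q * n := by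
    have : Real.exp ((b - a) * m) = q * Real.exp (b * m) := by
      rw [hq, ← Real.exp_add]; ring_nf
    rw [this]
    exact mul_le_mul_of_nonneg_left hn hq0.le
  have h6 : (Real.log N + 1) * m ≤ q * n / m := by
    rw [le_div_iff₀ (by positivity)] at hm1
    rw [le_div_iff₀ hm0]
    calc _ = (Real.log N + 1) * m ^ 2 := by ring
      _ ≤ _ := hm1.trans h5
  have h7 : q * (k / m + 1) ≤ k + 1 := by
    have : (k : ℝ) / m ≤ k := div_le_self (by positivity) hm1'
    have h0 : (0 : ℝ) ≤ k / m := by positivity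
    nlinarith
  have h8 : q * (((n : ℝ) - k) / m - 1) = q * n / m - q * (k / m + 1) := by ring
  nlinarith

/-- Along a sparse sequence of lengths `m k`, every code avoiding the limsup set has prefixes of
small probability. -/
lemma exists_lengths {N : ℕ} (hN : 2 ≤ N) {p : Fin N → ℝ}
    (hp : ∀ i, 0 < p i) (hpsum : ∑ i, p i = 1)
    {μ : Measure (ℕ → Fin N)} [IsProbabilityMeasure μ]
    (hμ : ∀ (m : ℕ) (w : Fin m → Fin N), μ (cylinder w) = ENNReal.ofReal (wordProd p w))
    {α : ℝ} (hα : 0 < α) {ℓ : ℕ → ℕ} (hℓmono : Monotone ℓ)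
    (hℓ : Filter.liminf (fun n : ℕ => (ℓ n : ℝ) / Real.log n) Filter.atTop = 1 / α)
    {a : ℝ} (ha : 0 < a) (haα : a < α) :
    ∃ m : ℕ → ℕ, (∀ k, k ≤ m k) ∧ ∀ᵐ o ∂μ, ∀ x ∉ limsupCylinders ℓ o,
      ∀ᶠ k in atTop, seqProd p x (m k) < Real.exp (-a * m k) := by
  obtain ⟨b, hab, hbα⟩ := exists_between haα
  have hb : 0 < b := ha.trans hab
  have hfreq : ∃ᶠ n : ℕ in atTop, (ℓ n : ℝ) / Real.log n < 1 / b :=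
    frequently_lt_of_liminf hα hℓ hb hbα
  have hℓtop := tendsto_of_liminf hα hℓ
  have hstep : ∀ k : ℕ, ∃ n : ℕ, k ≤ ℓ n ∧ k ≤ n ∧
      μ {o | ∃ w : Fin (ℓ n) → Fin N, Real.exp (-a * ℓ n) ≤ wordProd p w ∧
        ∀ i, k ≤ i → i ≤ n → ¬ ∀ j : Fin (ℓ n), o (i + j) = w j}
        ≤ ENNReal.ofReal ((1 / 2) ^ k) := by
    intro k
    have h1 := hℓtop.eventually (eventually_bad_small N k hN ha hab
      (ε := (1 / 2) ^ k) (by positivity))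
    obtain ⟨n, hn, h1, hk, hkn, hn2⟩ := (hfreq.and_eventually
      (h1.and ((hℓtop.eventually_ge_atTop k).and
        ((eventually_ge_atTop k).and (eventually_ge_atTop 2))))).exists
    refine ⟨n, hk, hkn, ?_⟩
    have hlog : 0 < Real.log n := Real.log_pos (by exact_mod_cast hn2)
    have h2 : Real.exp (b * ℓ n) ≤ n := by
      rw [← Real.exp_log (show (0 : ℝ) < n by positivity)]
      refine Real.exp_le_exp.2 ?_
      rw [div_lt_div_iff₀ hlog hb] at hn
      linarith
    have h3 := h1 n h2 hkn
    have h4 := measureReal_bad_le hp hpsum hμ k (ℓ n) n ((n - k) / ℓ n)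
      (by have := Nat.div_mul_le_self (n - k) (ℓ n); omega) (Real.exp (-a * ℓ n))
    rw [← ofReal_measureReal]
    exact ENNReal.ofReal_le_ofReal (h4.trans h3)
  choose n hnk hkn hn using hstep
  refine ⟨fun k => ℓ (n k), hnk, ?_⟩
  have hsum : ∑' k : ℕ, ENNReal.ofReal ((1 / 2 : ℝ) ^ k) ≠ ⊤ := by
    rw [← ENNReal.ofReal_tsum_of_nonneg (fun k => by positivity) summable_geometric_two]
    exact ENNReal.ofReal_ne_top
  have hbc := ae_eventually_notMem (ne_top_of_le_ne_top hsum (ENNReal.tsum_le_tsum hn))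
  filter_upwards [hbc] with o ho x hx
  simp only [limsupCylinders, mem_iInter, mem_iUnion, exists_prop, not_forall, not_exists,
    not_and] at hx
  obtain ⟨K, hK⟩ := hx
  filter_upwards [ho, eventually_ge_atTop K] with k hk hKk
  by_contra hcon
  push Not at hcon
  refine hk ⟨fun j => x j, ?_, ?_⟩
  · rwa [wordProd_eq_seqProd]
  · intro i hi hin hw
    refine hK i (hKk.trans hi) fun j => ?_
    have := hw ⟨j, j.2.trans_le (hℓmono hin)⟩
    exact this.symm

/-! ### The upper bound -/

lemma wordProd_tilt {N : ℕ} {lam p : Fin N → ℝ} (hlam : ∀ i, 0 < lam i) (hp : ∀ i, 0 < p i)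
    (s a q : ℝ) {m : ℕ} (w : Fin m → Fin N) :
    wordProd (fun i => lam i ^ s * (p i * Real.exp a) ^ q) w
      = wordProd lam w ^ s * (wordProd p w * Real.exp (a * m)) ^ q := by
  have he : Real.exp (a * m) = ∏ _j : Fin m, Real.exp a := by
    rw [Finset.prod_const, Finset.card_univ, Fintype.card_fin, ← Real.exp_nat_mul, mul_comm]
  simp only [wordProd]
  rw [he, ← Finset.prod_mul_distrib, ← Real.finsetProd_rpow _ _ (fun j _ => (hlam _).le),
    ← Real.finsetProd_rpow _ _ (fun j _ => (mul_pos (hp _) (Real.exp_pos _)).le),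
    ← Finset.prod_mul_distrib]

lemma sum_wordProd {N : ℕ} (c : Fin N → ℝ) (m : ℕ) :
    ∑ w : Fin m → Fin N, wordProd c w = (∑ i, c i) ^ m :=
  (Fintype.sum_pow c m).symm

/-- Codes whose prefixes of lengths `m k` eventually have probability below `exp (-a * m k)` form
a set of dimension at most `s`, by Markov's inequality with a negative exponent `q`. -/
lemma dimH_rare_le {N : ℕ} {E : Type*} [MetricSpace E]
    {lam p : Fin N → ℝ} {f : Fin N → E → E} {e : E} {π : (ℕ → Fin N) → E}
    [NeZero N] (hlam : ∀ i, lam i ∈ Set.Ioo (0 : ℝ) 1) (hp : ∀ i, 0 < p i)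
    (hf : ∀ i x y, dist (f i x) (f i y) = lam i * dist x y)
    (hπ : ∀ x, Tendsto (fun n => prefixMap f x n e) atTop (𝓝 (π x)))
    {Λ : Set E} (hΛb : Bornology.IsBounded Λ) (hπΛ : ∀ x, π x ∈ Λ)
    {a s q : ℝ} (hs : 0 < s) (hq : q < 0)
    (hsum : ∑ i, lam i ^ s * (p i * Real.exp a) ^ q < 1)
    {m : ℕ → ℕ} (hm : ∀ k, k ≤ m k) :
    dimH (π '' {x | ∀ᶠ k in atTop, seqProd p x (m k) < Real.exp (-a * m k)})
      ≤ ENNReal.ofReal s := by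
  have hlam0 : ∀ i, 0 < lam i := fun i => (hlam i).1
  borelize E
  obtain ⟨D, hD⟩ := Metric.isBounded_iff.1 hΛb
  have hD0 : 0 ≤ D := dist_nonneg.trans (hD (hπΛ fun _ => 0) (hπΛ fun _ => 0))
  have hsub : π '' {x | ∀ᶠ k in atTop, seqProd p x (m k) < Real.exp (-a * m k)}
      ⊆ ⋃ K : ℕ, π '' {x | ∀ k ≥ K, seqProd p x (m k) < Real.exp (-a * m k)} := by
    rintro _ ⟨x, hx, rfl⟩
    obtain ⟨K, hK⟩ := eventually_atTop.1 hx
    exact mem_iUnion.2 ⟨K, x, hK, rfl⟩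
  refine (dimH_mono hsub).trans ?_
  rw [dimH_iUnion]
  refine iSup_le fun K => ?_
  classical
  have hdiam : ∀ (n : ℕ) (w : Fin n → Fin N),
      Metric.ediam (π '' cylinder w) ≤ ENNReal.ofReal (wordProd lam w * D) := by
    intro n w
    refine Metric.ediam_le_of_forall_dist_le ?_
    rintro _ ⟨x, hx, rfl⟩ _ ⟨y, hy, rfl⟩
    have hw : w = fun j : Fin n => x j := funext fun j => (hx j).symm
    rw [dist_coding hf hlam0 hπ (x := x) (y := y) (n := n)
      (fun j hj => (hx ⟨j, hj⟩).trans (hy ⟨j, hj⟩).symm), hw, wordProd_eq_seqProd]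
    exact mul_le_mul_of_nonneg_left (hD (hπΛ _) (hπΛ _)) (seqProd_pos hlam0 _ _).le
  let t : ∀ k, (Fin (m k) → Fin N) → Set E := fun k w =>
    if wordProd p w < Real.exp (-a * m k) then π '' cylinder w else ∅
  obtain ⟨b, hb0, hb1, hb⟩ := exists_lam_bound hlam
  have hmtop : Tendsto m atTop atTop := tendsto_atTop_mono hm tendsto_id
  set g := ∑ i, lam i ^ s * (p i * Real.exp a) ^ q with hg
  have hterm : ∀ i, 0 < lam i ^ s * (p i * Real.exp a) ^ q := fun i =>
    mul_pos (Real.rpow_pos_of_pos (hlam0 i) _)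
      (Real.rpow_pos_of_pos (mul_pos (hp i) (Real.exp_pos _)) _)
  have hg0 : 0 ≤ g := Finset.sum_nonneg fun i _ => (hterm i).le
  have h1 := Measure.hausdorffMeasure_le_liminf_sum s
    (π '' {x | ∀ k ≥ K, seqProd p x (m k) < Real.exp (-a * m k)}) (l := atTop)
    (fun k => ENNReal.ofReal (b ^ m k * D)) (by
      have : Tendsto (fun k => b ^ m k * D) atTop (𝓝 0) := by
        simpa using ((tendsto_pow_atTop_nhds_zero_of_lt_one hb0.le hb1).comp hmtop).mul_const D
      simpa using ENNReal.tendsto_ofReal this) t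
    (Eventually.of_forall fun k w => by
      by_cases h : wordProd p w < Real.exp (-a * m k)
      · simp only [t, h, if_true]
        refine (hdiam _ w).trans (ENNReal.ofReal_le_ofReal ?_)
        refine mul_le_mul_of_nonneg_right ?_ hD0
        calc wordProd lam w ≤ ∏ _j : Fin (m k), b :=
              Finset.prod_le_prod (fun _ _ => (hlam0 _).le) fun _ _ => hb _
          _ = _ := by simp
      · rw [show t k w = ∅ from if_neg h]
        simp)
    (by
      filter_upwards [eventually_ge_atTop K] with k hk
      rintro _ ⟨x, hx, rfl⟩
      refine mem_iUnion.2 ⟨fun j => x j, ?_⟩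
      have := hx k hk
      simp only [t, wordProd_eq_seqProd, this, if_true]
      exact ⟨x, fun _ => rfl, rfl⟩)
  have h2 : ∀ k, ∑ w, Metric.ediam (t k w) ^ s ≤ ENNReal.ofReal (D ^ s * g ^ m k) := by
    intro k
    rw [hg, ← sum_wordProd, Finset.mul_sum, ENNReal.ofReal_sum_of_nonneg]
    · refine Finset.sum_le_sum fun w _ => ?_
      by_cases h : wordProd p w < Real.exp (-a * m k)
      · simp only [t, h, if_true]
        have hw0 : 0 ≤ wordProd lam w := Finset.prod_nonneg fun _ _ => (hlam0 _).le
        have hp0 : 0 < wordProd p w := Finset.prod_pos fun _ _ => hp _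
        refine (ENNReal.rpow_le_rpow (hdiam _ w) hs.le).trans ?_
        rw [ENNReal.ofReal_rpow_of_nonneg (by positivity) hs.le]
        refine ENNReal.ofReal_le_ofReal ?_
        rw [Real.mul_rpow hw0 hD0, mul_comm, wordProd_tilt hlam0 hp]
        refine mul_le_mul_of_nonneg_left ?_ (by positivity)
        refine le_mul_of_one_le_right (by positivity) ?_
        refine Real.one_le_rpow_of_pos_of_le_one_of_nonpos (by positivity) ?_ hq.le
        have h3 := mul_le_mul_of_nonneg_right h.le (Real.exp_pos (a * m k)).le
        rwa [← Real.exp_add, neg_mul, neg_add_cancel, Real.exp_zero] at h3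
      · rw [show t k w = ∅ from if_neg h]
        simp [hs]
    · intro w _
      exact mul_nonneg (Real.rpow_nonneg hD0 _) (Finset.prod_nonneg fun _ _ => (hterm _).le)
  have h3 : Tendsto (fun k => ENNReal.ofReal (D ^ s * g ^ m k)) atTop (𝓝 0) := by
    have : Tendsto (fun k => D ^ s * g ^ m k) atTop (𝓝 0) := by
      simpa using ((tendsto_pow_atTop_nhds_zero_of_lt_one hg0 hsum).comp hmtop).const_mul (D ^ s)
    simpa using ENNReal.tendsto_ofReal this
  have h4 : μH[s] (π '' {x | ∀ k ≥ K, seqProd p x (m k) < Real.exp (-a * m k)}) ≤ 0 := by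
    refine h1.trans ?_
    rw [← h3.liminf_eq]
    exact liminf_le_liminf (Eventually.of_forall h2)
  have h5 : μH[((⟨s, hs.le⟩ : NNReal) : ℝ)]
      (π '' {x | ∀ k ≥ K, seqProd p x (m k) < Real.exp (-a * m k)}) ≠ ⊤ :=
    ne_top_of_le_ne_top ENNReal.zero_ne_top h4
  refine (dimH_le_of_hausdorffMeasure_ne_top h5).trans ?_
  rw [ENNReal.ofReal, Real.toNNReal_of_nonneg hs.le]
  exact le_rfl

/-! ### Many words of small probability -/

/-- The leftmost minimiser `q₀` of `q ↦ ∑ cᵢ exp (q Xᵢ)` over `q ≤ 0`; the derivative vanishes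
there unless `q₀ = 0`. -/
lemma exists_leftmost_min {N : ℕ} (c X : Fin N → ℝ) (hc : ∀ i, 0 < c i) (hX : ∃ i, X i < 0) :
    ∃ q₀ ≤ 0, (∀ q < q₀, ∑ i, c i * Real.exp (q₀ * X i) < ∑ i, c i * Real.exp (q * X i)) ∧
      ∃ D, HasDerivAt (fun q => ∑ i, c i * Real.exp (q * X i)) D q₀ ∧ q₀ * D = 0 := by
  set g : ℝ → ℝ := fun q => ∑ i, c i * Real.exp (q * X i) with hgdef
  have hcont : Continuous g := by fun_prop
  obtain ⟨i, hi⟩ := hX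
  have hlim : Tendsto g atBot atTop := by
    have h1 : Tendsto (fun q : ℝ => c i * Real.exp (q * X i)) atBot atTop :=
      (Real.tendsto_exp_atTop.comp (tendsto_id.atBot_mul_const_of_neg hi)).const_mul_atTop (hc i)
    refine tendsto_atTop_mono (fun q => ?_) h1
    exact Finset.single_le_sum (f := fun i => c i * Real.exp (q * X i))
      (fun j _ => (mul_pos (hc j) (Real.exp_pos _)).le) (Finset.mem_univ i)
  obtain ⟨Q, hQ⟩ := eventually_atBot.1 ((hlim.eventually_gt_atTop (g 0)).and
    (eventually_le_atBot 0))
  have hQ0 : Q ≤ 0 := (hQ Q le_rfl).2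
  obtain ⟨r, hr, hrmin⟩ := isCompact_Icc.exists_isMinOn (nonempty_Icc.2 hQ0) hcont.continuousOn
  have hAc : IsCompact (Icc Q 0 ∩ {q | g q ≤ g r}) :=
    isCompact_Icc.inter_right (isClosed_le hcont continuous_const)
  obtain ⟨q₀, ⟨hq₀, hq₀r⟩, hleast⟩ := hAc.exists_isLeast ⟨r, hr, le_refl (g r)⟩
  have hmin : ∀ q ≤ 0, g q₀ ≤ g q := by
    intro q hq
    by_cases h : Q ≤ q
    · exact le_trans hq₀r (hrmin ⟨h, hq⟩)
    · exact le_trans (le_trans hq₀r (hrmin ⟨hQ0, le_rfl⟩)) (hQ q (not_le.1 h).le).1.le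
  have hderiv : HasDerivAt g (∑ i, c i * (Real.exp (q₀ * X i) * (1 * X i))) q₀ := by
    refine HasDerivAt.fun_sum fun i _ => ?_
    exact (((hasDerivAt_id q₀).mul_const (X i)).exp).const_mul (c i)
  refine ⟨q₀, hq₀.2, fun q hq => ?_, _, hderiv, ?_⟩
  · by_cases h : Q ≤ q
    · by_contra hcon
      have : q ∈ Icc Q 0 ∩ {q | g q ≤ g r} :=
        ⟨⟨h, hq.le.trans hq₀.2⟩, le_trans (not_lt.1 hcon) hq₀r⟩
      exact absurd (hleast this) (not_le.2 hq)
    · exact lt_of_le_of_lt (hmin 0 le_rfl) (hQ q (not_le.1 h).le).1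
  · rcases hq₀.2.lt_or_eq with h | h
    · have hloc : IsLocalMin g q₀ := by
        filter_upwards [Iio_mem_nhds h] with q hq using hmin q (le_of_lt hq)
      rw [hloc.hasDerivAt_eq_zero hderiv, mul_zero]
    · rw [h, zero_mul]

/-- Pointwise splitting of `exp (q₁ S)`, `q₁ = q₀ - δ`, according to whether `S` is above `-ε`,
below `-A`, or in between; the two outer pieces are controlled by the exponents `q₀` and
`q₀ - 2 δ`. -/
lemma exp_split {q₀ δ ε A S : ℝ} (hδ : 0 < δ) (hq₀ : q₀ ≤ 0) :
    Real.exp ((q₀ - δ) * S) ≤ (if S ≤ -ε then Real.exp (-(q₀ - δ) * A) else 0)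
      + Real.exp (q₀ * S) * Real.exp (δ * ε)
      + Real.exp ((q₀ - 2 * δ) * S) * Real.exp (-δ * A) := by
  rw [← Real.exp_add, ← Real.exp_add]
  have e1 := Real.exp_pos (q₀ * S + δ * ε)
  have e2 := Real.exp_pos ((q₀ - 2 * δ) * S + -δ * A)
  have e3 := Real.exp_pos (-(q₀ - δ) * A)
  by_cases h1 : S ≤ -ε
  · rw [if_pos h1]
    by_cases h2 : S < -A
    · have : Real.exp ((q₀ - δ) * S) ≤ Real.exp ((q₀ - 2 * δ) * S + -δ * A) :=
        Real.exp_le_exp.2 (by nlinarith)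
      linarith
    · have : Real.exp ((q₀ - δ) * S) ≤ Real.exp (-(q₀ - δ) * A) :=
        Real.exp_le_exp.2 (by nlinarith)
      linarith
  · rw [if_neg h1]
    have : Real.exp ((q₀ - δ) * S) ≤ Real.exp (q₀ * S + δ * ε) :=
      Real.exp_le_exp.2 (by nlinarith)
    linarith

/-- If the pressure sum exceeds `1` for all `q ≤ 0`, the words whose probability is exponentially
smaller than `exp (-α n)` carry an unbounded `s`-sum of contraction ratios. -/
lemma exists_rich_words {N : ℕ} {lam p : Fin N → ℝ} (hlam : ∀ i, 0 < lam i) (hp : ∀ i, 0 < p i)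
    {α s : ℝ} (hX : ∃ i, p i * Real.exp α < 1)
    (hgt : ∀ q : ℝ, q ≤ 0 → 1 < ∑ i, lam i ^ s * (p i * Real.exp α) ^ q) :
    ∃ ε > 0, ∀ B : ℝ, ∀ᶠ n : ℕ in atTop,
      B ≤ ∑ w : Fin n → Fin N,
        if wordProd p w ≤ Real.exp (-(α + ε) * n) then wordProd lam w ^ s else 0 := by
  set X : Fin N → ℝ := fun i => Real.log (p i) + α with hXdef
  have hpX : ∀ i (q : ℝ), (p i * Real.exp α) ^ q = Real.exp (q * X i) := fun i q => by
    rw [Real.rpow_def_of_pos (mul_pos (hp i) (Real.exp_pos _)),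
      Real.log_mul (hp i).ne' (Real.exp_pos _).ne', Real.log_exp, mul_comm]
  set c : Fin N → ℝ := fun i => lam i ^ s with hcdef
  have hc : ∀ i, 0 < c i := fun i => Real.rpow_pos_of_pos (hlam i) s
  set g : ℝ → ℝ := fun q => ∑ i, c i * Real.exp (q * X i) with hgdef
  have hgt' : ∀ q ≤ 0, 1 < g q := fun q hq => by
    have := hgt q hq
    simpa only [hpX] using this
  obtain ⟨q₀, hq₀, hleft, D, hD, hqD⟩ := exists_leftmost_min c X hc (by
    obtain ⟨i, hi⟩ := hX
    refine ⟨i, ?_⟩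
    have := Real.log_neg (mul_pos (hp i) (Real.exp_pos α)) hi
    rwa [Real.log_mul (hp i).ne' (Real.exp_pos _).ne', Real.log_exp] at this)
  have hleft' : ∀ q < q₀, g q₀ < g q := hleft
  have hG := hgt' q₀ hq₀
  have hGlog : 0 < Real.log (g q₀) := Real.log_pos hG
  -- choice of `δ`: the loss `(q₀ - δ) A` tends to `2 q₀ D / g q₀ = 0`
  obtain ⟨δ, hδ, hloss⟩ : ∃ δ > 0, -(q₀ - δ) *
      ((Real.log (g (q₀ - 2 * δ)) - Real.log (g q₀)) / δ + δ) < Real.log (g q₀) / 2 := by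
    have hd : HasDerivAt (fun δ : ℝ => Real.log (g (q₀ - 2 * δ)))
        (D * (-2) / g q₀) 0 := by
      have h1 : HasDerivAt (fun δ : ℝ => q₀ - 2 * δ) (-2) 0 := by
        simpa using ((hasDerivAt_id (0 : ℝ)).const_mul 2).const_sub q₀
      have h2 : HasDerivAt g D (q₀ - 2 * 0) := by simpa using hD
      have h3 := (HasDerivAt.comp (0 : ℝ) h2 h1).log
        (by simpa using (zero_lt_one.trans hG).ne')
      simpa using h3
    have hslope := hd.tendsto_slope_zero_right
    have hlim : Tendsto (fun δ : ℝ => -(q₀ - δ) *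
        ((Real.log (g (q₀ - 2 * δ)) - Real.log (g q₀)) / δ + δ)) (𝓝[>] 0)
        (𝓝 (-(q₀ - 0) * (D * (-2) / g q₀ + 0))) := by
      have hid : Tendsto (fun δ : ℝ => δ) (𝓝[>] 0) (𝓝 0) := nhdsWithin_le_nhds
      refine (hid.const_sub q₀).neg.mul (Tendsto.add ?_ hid)
      refine hslope.congr fun δ => ?_
      simp [div_eq_inv_mul]
    have hz : -(q₀ - 0) * (D * (-2) / g q₀ + 0) = 0 := by
      have : -(q₀ - 0) * (D * (-2) / g q₀ + 0) = 2 * (q₀ * D) / g q₀ := by ring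
      rw [this, hqD]; simp
    rw [hz] at hlim
    obtain ⟨δ, h1, h2⟩ := ((hlim.eventually_lt_const (half_pos hGlog)).and
      self_mem_nhdsWithin).exists
    exact ⟨δ, h2, h1⟩
  set A := (Real.log (g (q₀ - 2 * δ)) - Real.log (g q₀)) / δ + δ with hA
  have hg1 : g q₀ < g (q₀ - δ) := hleft' _ (by linarith)
  have hg2 : g q₀ < g (q₀ - 2 * δ) := hleft' _ (by linarith)
  have hgpos : 0 < g q₀ := by linarith
  set ε := (Real.log (g (q₀ - δ)) - Real.log (g q₀)) / (2 * δ) with hε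
  have hlog1 : Real.log (g q₀) < Real.log (g (q₀ - δ)) := Real.log_lt_log hgpos hg1
  have hε0 : 0 < ε := div_pos (by linarith) (by linarith)
  refine ⟨ε, hε0, fun B => ?_⟩
  set g₁ := g (q₀ - δ) with hg₁
  have hg₁pos : 0 < g₁ := by linarith
  have hρ₁ : g q₀ * Real.exp (δ * ε) / g₁ < 1 := by
    rw [div_lt_one hg₁pos, ← Real.exp_log hgpos, ← Real.exp_add, ← Real.exp_log hg₁pos,
      Real.exp_lt_exp]
    have : δ * ε = (Real.log g₁ - Real.log (g q₀)) / 2 := by rw [hε]; field_simp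
    linarith
  have hρ₂ : g (q₀ - 2 * δ) * Real.exp (-δ * A) / g₁ < 1 := by
    rw [div_lt_one hg₁pos, ← Real.exp_log (hgpos.trans hg2), ← Real.exp_add,
      ← Real.exp_log hg₁pos, Real.exp_lt_exp]
    have : -δ * A = -(Real.log (g (q₀ - 2 * δ)) - Real.log (g q₀)) - δ ^ 2 := by
      rw [hA]; field_simp; ring
    nlinarith
  set ρ₁ := g q₀ * Real.exp (δ * ε) / g₁ with hρ₁d
  set ρ₂ := g (q₀ - 2 * δ) * Real.exp (-δ * A) / g₁ with hρ₂d
  have hsum : ∀ (n : ℕ) (q : ℝ), ∑ w : Fin n → Fin N, wordProd lam w ^ s *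
      Real.exp (q * (Real.log (wordProd p w) + α * n)) = g q ^ n := by
    intro n q
    rw [hgdef]
    simp only []
    rw [← sum_wordProd]
    refine Finset.sum_congr rfl fun w _ => ?_
    have h0 : 0 < wordProd p w := Finset.prod_pos fun _ _ => hp _
    simp only [hcdef, ← hpX]
    rw [wordProd_tilt hlam hp, Real.rpow_def_of_pos (mul_pos h0 (Real.exp_pos _)),
      Real.log_mul h0.ne' (Real.exp_pos _).ne', Real.log_exp, mul_comm q]
  -- summing the pointwise splitting over all words of length `n`
  have hmain : ∀ n : ℕ, g₁ ^ n ≤ Real.exp (-(q₀ - δ) * A) ^ n *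
      (∑ w : Fin n → Fin N,
        if wordProd p w ≤ Real.exp (-(α + ε) * n) then wordProd lam w ^ s else 0)
      + (g q₀ * Real.exp (δ * ε)) ^ n + (g (q₀ - 2 * δ) * Real.exp (-δ * A)) ^ n := by
    intro n
    rw [mul_pow, mul_pow, ← hsum n, ← hsum n, ← hsum n, Finset.sum_mul, Finset.sum_mul,
      Finset.mul_sum, ← Finset.sum_add_distrib, ← Finset.sum_add_distrib]
    refine Finset.sum_le_sum fun w _ => ?_
    have h0 : 0 < wordProd p w := Finset.prod_pos fun _ _ => hp _
    have hw0 : 0 ≤ wordProd lam w ^ s :=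
      Real.rpow_nonneg (Finset.prod_nonneg fun _ _ => (hlam _).le) s
    have h1 := exp_split (q₀ := q₀) (δ := δ) (ε := ε * n) (A := A * n)
      (S := Real.log (wordProd p w) + α * n) hδ hq₀
    have h2 := mul_le_mul_of_nonneg_left h1 hw0
    have hiff : Real.log (wordProd p w) + α * n ≤ -(ε * n)
        ↔ wordProd p w ≤ Real.exp (-(α + ε) * n) := by
      rw [← Real.log_le_iff_le_exp h0]
      constructor <;> intro h <;> linarith
    simp only [hiff] at h2
    refine h2.trans (le_of_eq ?_)
    rw [← Real.exp_nat_mul, ← Real.exp_nat_mul, ← Real.exp_nat_mul]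
    have e1 : (n : ℝ) * (-(q₀ - δ) * A) = -(q₀ - δ) * (A * n) := by ring
    have e2 : (n : ℝ) * (δ * ε) = δ * (ε * n) := by ring
    have e3 : (n : ℝ) * (-δ * A) = -δ * (A * n) := by ring
    rw [e1, e2, e3]
    split_ifs <;> ring
  -- the base of the exponential lower bound
  set τ := g₁ / Real.exp (-(q₀ - δ) * A) with hτ
  have hτ1 : 1 < τ := by
    rw [hτ, one_lt_div (Real.exp_pos _), ← Real.lt_log_iff_exp_lt hg₁pos]
    linarith
  have hsmall : ∀ᶠ n : ℕ in atTop, ρ₁ ^ n + ρ₂ ^ n ≤ 1 / 2 := by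
    have h1 := tendsto_pow_atTop_nhds_zero_of_lt_one (r := ρ₁)
      (div_nonneg (mul_nonneg hgpos.le (Real.exp_pos _).le) hg₁pos.le) hρ₁
    have h2 := tendsto_pow_atTop_nhds_zero_of_lt_one (r := ρ₂)
      (div_nonneg (mul_nonneg (hgpos.trans hg2).le (Real.exp_pos _).le) hg₁pos.le) hρ₂
    have h3 := h1.add h2
    rw [add_zero] at h3
    exact h3.eventually_le_const (by norm_num)
  filter_upwards [hsmall, (tendsto_pow_atTop_atTop_of_one_lt hτ1).eventually_ge_atTop (2 * B)]
    with n hn1 hn2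
  set Y := ∑ w : Fin n → Fin N,
        if wordProd p w ≤ Real.exp (-(α + ε) * n) then wordProd lam w ^ s else 0
  have h1 := hmain n
  have hgn : 0 < g₁ ^ n := pow_pos hg₁pos n
  have hen : 0 < Real.exp (-(q₀ - δ) * A) ^ n := pow_pos (Real.exp_pos _) n
  have e1 : (g q₀ * Real.exp (δ * ε)) ^ n = ρ₁ ^ n * g₁ ^ n := by
    rw [← mul_pow, hρ₁d, div_mul_cancel₀ _ hg₁pos.ne']
  have e2 : (g (q₀ - 2 * δ) * Real.exp (-δ * A)) ^ n = ρ₂ ^ n * g₁ ^ n := by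
    rw [← mul_pow, hρ₂d, div_mul_cancel₀ _ hg₁pos.ne']
  rw [e1, e2] at h1
  have h2 : g₁ ^ n / 2 ≤ Real.exp (-(q₀ - δ) * A) ^ n * Y := by nlinarith
  have h3 : τ ^ n / 2 ≤ Y := by
    rw [hτ, div_pow, div_div, div_le_iff₀ (by positivity)]
    linarith
  linarith

/-! ### A separating word -/

/-- The composition `f_{w 0} ∘ f_{w 1} ∘ ⋯` along a finite list `w`. -/
def listMap {N : ℕ} {E : Type*} (f : Fin N → E → E) : List (Fin N) → E → E
  | [] => id
  | i :: w => fun y => f i (listMap f w y)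

/-- The product of the weights along a finite list. -/
def listProd {N : ℕ} (r : Fin N → ℝ) (w : List (Fin N)) : ℝ := (w.map r).prod

lemma listProd_append {N : ℕ} (r : Fin N → ℝ) (a b : List (Fin N)) :
    listProd r (a ++ b) = listProd r a * listProd r b := by simp [listProd]

lemma listProd_cons {N : ℕ} (r : Fin N → ℝ) (i : Fin N) (b : List (Fin N)) :
    listProd r (i :: b) = r i * listProd r b := by simp [listProd]

lemma listProd_pos {N : ℕ} {r : Fin N → ℝ} (hr : ∀ i, 0 < r i) (w : List (Fin N)) :
    0 < listProd r w := by
  induction w with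
  | nil => simp [listProd]
  | cons i w ih => rw [listProd_cons]; exact mul_pos (hr i) ih

lemma listProd_le_one {N : ℕ} {r : Fin N → ℝ} (hr : ∀ i, r i ∈ Ioo (0 : ℝ) 1)
    (w : List (Fin N)) : listProd r w ≤ 1 := by
  induction w with
  | nil => simp [listProd]
  | cons i w ih =>
    rw [listProd_cons]
    exact mul_le_one₀ (hr i).2.le (listProd_pos (fun i => (hr i).1) w).le ih

lemma listMap_append {N : ℕ} {E : Type*} (f : Fin N → E → E) (a b : List (Fin N)) (y : E) :
    listMap f (a ++ b) y = listMap f a (listMap f b y) := by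
  induction a with
  | nil => rfl
  | cons i a ih => simp only [List.cons_append, listMap, ih]

lemma listMap_mem {N : ℕ} {E : Type*} {f : Fin N → E → E} {Λ : Set E}
    (hΛ : ∀ i, ∀ y ∈ Λ, f i y ∈ Λ) (w : List (Fin N)) {y : E} (hy : y ∈ Λ) :
    listMap f w y ∈ Λ := by
  induction w with
  | nil => exact hy
  | cons i a ih => exact hΛ _ _ ih

lemma dist_listMap {N : ℕ} {E : Type*} [MetricSpace E] {lam : Fin N → ℝ} {f : Fin N → E → E}
    (hf : ∀ i x y, dist (f i x) (f i y) = lam i * dist x y) (w : List (Fin N)) (y z : E) :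
    dist (listMap f w y) (listMap f w z) = listProd lam w * dist y z := by
  induction w with
  | nil => simp [listMap, listProd]
  | cons i a ih => rw [listProd_cons, mul_assoc, ← ih, ← hf]; rfl

lemma listMap_injective {N : ℕ} {E : Type*} [MetricSpace E] {lam : Fin N → ℝ}
    {f : Fin N → E → E} (hlam : ∀ i, 0 < lam i)
    (hf : ∀ i x y, dist (f i x) (f i y) = lam i * dist x y) (w : List (Fin N)) :
    Function.Injective (listMap f w) := by
  intro y z h
  have h1 := dist_listMap hf w y z
  rw [h, dist_self] at h1
  exact dist_eq_zero.1 ((mul_eq_zero.1 h1.symm).resolve_left (listProd_pos hlam w).ne')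

lemma listMap_ofFn {N : ℕ} {E : Type*} (f : Fin N → E → E) (x : ℕ → Fin N) (n : ℕ) :
    listMap f (List.ofFn fun k : Fin n => x k) = prefixMap f x n := by
  induction n generalizing x with
  | zero => rfl
  | succ n ih =>
    funext y
    rw [List.ofFn_succ]
    simp only [listMap, prefixMap, Fin.val_zero, Fin.val_succ]
    rw [ih fun k => x (k + 1)]

lemma listProd_ofFn {N : ℕ} (r : Fin N → ℝ) (x : ℕ → Fin N) (n : ℕ) :
    listProd r (List.ofFn fun k : Fin n => x k) = seqProd r x n := by
  rw [listProd, List.map_ofFn, List.prod_ofFn, seqProd, Finset.prod_range]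
  rfl

/-- `I` is a family of words whose pieces have size comparable with that of the piece of `w`, meet
the piece of `w`, and come from pairwise disjoint copies of the open set `U`. -/
def GoodFamily {N : ℕ} {E : Type*} (lam : Fin N → ℝ) (f : Fin N → E → E) (Λ U : Set E) (c : ℝ)
    (w : List (Fin N)) (I : Finset (List (Fin N))) : Prop :=
  (∀ v ∈ I, c * listProd lam w < listProd lam v ∧ listProd lam v ≤ listProd lam w ∧
    (listMap f v '' Λ ∩ listMap f w '' Λ).Nonempty) ∧
  (I : Set (List (Fin N))).PairwiseDisjoint fun v => listMap f v '' U

section Separation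

variable {N : ℕ} {E : Type*} [NormedAddCommGroup E] [NormedSpace ℝ E] [FiniteDimensional ℝ E]
  [MeasurableSpace E] [BorelSpace E]

lemma hausdorff_similarity {r : ℝ} (hr : 0 < r) {g : E → E}
    (hg : ∀ x y, dist (g x) (g y) = r * dist x y) {s : Set E} (hs : IsCompact s) :
    r ^ Module.finrank ℝ E * (μH[Module.finrank ℝ E] : Measure E).real s
      ≤ (μH[Module.finrank ℝ E] : Measure E).real (g '' s) := by
  have hcont : Continuous g := (LipschitzWith.of_dist_le_mul (K := ⟨r, hr.le⟩)
    (fun x y => (hg x y).le)).continuous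
  have hanti : AntilipschitzWith (⟨r, hr.le⟩⁻¹ : NNReal) g := by
    refine AntilipschitzWith.of_le_mul_dist fun x y => ?_
    rw [hg]
    change dist x y ≤ r⁻¹ * (r * dist x y)
    rw [inv_mul_cancel_left₀ hr.ne']
  have h := hanti.le_hausdorffMeasure_image (d := Module.finrank ℝ E) (Nat.cast_nonneg _) s
  have hfin : (μH[Module.finrank ℝ E] : Measure E) (g '' s) ≠ ∞ :=
    (hs.image hcont).measure_lt_top.ne
  have h2 := ENNReal.toReal_mono (by
    refine ENNReal.mul_ne_top ?_ hfin
    rw [ENNReal.rpow_natCast]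
    exact ENNReal.pow_ne_top ENNReal.coe_ne_top) h
  rw [ENNReal.toReal_mul, ENNReal.rpow_natCast, ENNReal.toReal_pow, ENNReal.coe_toReal] at h2
  change (μH[Module.finrank ℝ E] : Measure E).real s ≤ r⁻¹ ^ Module.finrank ℝ E * 
    (μH[Module.finrank ℝ E] : Measure E).real (g '' s) at h2
  rw [inv_pow, inv_mul_eq_div, le_div_iff₀ (by positivity)] at h2
  linarith

/-- By volume comparison, good families have uniformly bounded cardinality. -/
lemma card_goodFamily_le {lam : Fin N → ℝ} (hlam : ∀ i, lam i ∈ Ioo (0 : ℝ) 1) {f : Fin N → E → E}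
    (hf : ∀ i x y, dist (f i x) (f i y) = lam i * dist x y) {Λ U : Set E}
    (hΛne : Λ.Nonempty) (hΛb : Bornology.IsBounded Λ)
    (hUne : U.Nonempty) (hUo : IsOpen U) (hUb : Bornology.IsBounded U) {c : ℝ} (hc : 0 < c) :
    ∃ C : ℕ, ∀ w I, GoodFamily lam f Λ U c w I → I.card ≤ C := by
  have hlam0 : ∀ i, 0 < lam i := fun i => (hlam i).1
  obtain ⟨x₀, hx₀⟩ := hUne
  obtain ⟨r, hr, hball⟩ := Metric.nhds_basis_closedBall.mem_iff.1 (hUo.mem_nhds hx₀)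
  obtain ⟨a, ha⟩ := hΛne
  obtain ⟨D, hD'⟩ := Metric.isBounded_iff.1 (hUb.union hΛb)
  have hD : ∀ x ∈ U ∪ Λ, ∀ y ∈ U ∪ Λ, dist x y ≤ D := fun x hx y hy => hD' hx hy
  have hD0 : 0 ≤ D := dist_nonneg.trans (hD a (.inr ha) a (.inr ha))
  set m : Measure E := μH[Module.finrank ℝ E] with hm
  set n := Module.finrank ℝ E
  have hmB : 0 < m.real (Metric.closedBall x₀ r) :=
    ENNReal.toReal_pos (Metric.measure_closedBall_pos m x₀ hr).ne'
      (isCompact_closedBall x₀ r).measure_lt_top.ne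
  obtain ⟨C, hC⟩ := exists_nat_ge ((2 * D) ^ n * m.real (Metric.ball 0 1) /
    (c ^ n * m.real (Metric.closedBall x₀ r)))
  refine ⟨C, fun w I hI => ?_⟩
  have hw : 0 < listProd lam w := listProd_pos hlam0 w
  have hsub : (⋃ v ∈ I, listMap f v '' Metric.closedBall x₀ r) ⊆
      Metric.closedBall (listMap f w a) (2 * D * listProd lam w) := by
    intro z hz
    simp only [mem_iUnion] at hz
    obtain ⟨v, hv, x, hx, rfl⟩ := hz
    obtain ⟨-, hvw, _, ⟨b, hb, rfl⟩, b', hb', hbb⟩ := hI.1 v hv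
    rw [Metric.mem_closedBall]
    have h1 : dist (listMap f v x) (listMap f v b) ≤ listProd lam w * D := by
      rw [dist_listMap hf]
      exact mul_le_mul hvw (hD _ (.inl (hball hx)) _ (.inr hb)) dist_nonneg hw.le
    have h2 : dist (listMap f v b) (listMap f w a) ≤ listProd lam w * D := by
      rw [← hbb, dist_listMap hf]
      exact mul_le_mul_of_nonneg_left (hD _ (.inr hb') _ (.inr ha)) hw.le
    linarith [dist_triangle (listMap f v x) (listMap f v b) (listMap f w a)]
  have hcomp : ∀ v, IsCompact (listMap f v '' Metric.closedBall x₀ r) := fun v =>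
    (isCompact_closedBall x₀ r).image (LipschitzWith.of_dist_le_mul
      (K := ⟨listProd lam v, (listProd_pos hlam0 v).le⟩)
      (fun x y => (dist_listMap hf v x y).le)).continuous
  have h1 : ∑ v ∈ I, m.real (listMap f v '' Metric.closedBall x₀ r) ≤
      (2 * D * listProd lam w) ^ n * m.real (Metric.ball 0 1) := by
    rw [← measureReal_biUnion_finset (fun v hv v' hv' hne =>
      (hI.2 hv hv' hne).mono (image_mono hball) (image_mono hball))
      (fun v _ => (hcomp v).measurableSet) (fun v _ => (hcomp v).measure_lt_top.ne),
      ← Measure.addHaar_real_closedBall m _ (by positivity)]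
    exact measureReal_mono hsub (isCompact_closedBall _ _).measure_lt_top.ne
  have h2 : ∑ _v ∈ I, (c * listProd lam w) ^ n * m.real (Metric.closedBall x₀ r) ≤
      ∑ v ∈ I, m.real (listMap f v '' Metric.closedBall x₀ r) := by
    refine Finset.sum_le_sum fun v hv => ?_
    refine le_trans ?_ (hausdorff_similarity (listProd_pos hlam0 v) (dist_listMap hf v)
      (isCompact_closedBall x₀ r))
    gcongr
    exact (hI.1 v hv).1.le
  rw [Finset.sum_const, nsmul_eq_mul] at h2
  have h3 := h2.trans h1
  rw [mul_pow, mul_pow (2 * D)] at h3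
  have hwn : 0 < listProd lam w ^ n := by positivity
  have h4 : (I.card : ℝ) * (c ^ n * m.real (Metric.closedBall x₀ r)) ≤
      (2 * D) ^ n * m.real (Metric.ball 0 1) := by
    refine le_of_mul_le_mul_left ?_ hwn
    linarith
  rw [← le_div_iff₀ (by positivity)] at h4
  exact_mod_cast h4.trans hC

/-- The open set condition yields a word `u` such that a code in which `u` occurs at a positive
position cannot share its image with a code having another first symbol.
Such a `u` is the centre of a good family of maximal cardinality: if `f_{au}(Λ)` met `f_j(Λ)` with
`j ≠ a₀`, then prefixing the family by `a` and adding a suitable word that starts with `j` would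
give a larger one. -/
lemma exists_separating_word [NeZero N] {lam : Fin N → ℝ} (hlam : ∀ i, lam i ∈ Ioo (0 : ℝ) 1)
    {f : Fin N → E → E} (hf : ∀ i x y, dist (f i x) (f i y) = lam i * dist x y) {Λ U : Set E}
    (hΛne : Λ.Nonempty) (hΛc : IsCompact Λ) (hΛ : Λ = ⋃ i, f i '' Λ)
    (hUne : U.Nonempty) (hUo : IsOpen U) (hUb : Bornology.IsBounded U)
    (hUsub : ∀ i, f i '' U ⊆ U) (hUdisj : Pairwise fun i j => Disjoint (f i '' U) (f j '' U))
    {e : E} {π : (ℕ → Fin N) → E}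
    (hπ : ∀ x, Tendsto (fun n => prefixMap f x n e) atTop (𝓝 (π x))) :
    ∃ (L : ℕ) (u : Fin L → Fin N), ∀ x y : ℕ → Fin N, x 0 ≠ y 0 →
      ∀ n ≥ 1, (∀ j : Fin L, x (n + j) = u j) → π x ≠ π y := by
  classical
  have hlam0 : ∀ i, 0 < lam i := fun i => (hlam i).1
  obtain ⟨i₀, hi₀⟩ := Finite.exists_min lam
  set c := lam i₀
  obtain ⟨C, hC⟩ := card_goodFamily_le hlam hf hΛne hΛc.isBounded hUne hUo hUb (hlam0 i₀)
  set S : Set ℕ := {k | ∃ w I, GoodFamily lam f Λ U c w I ∧ I.card = k} with hS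
  have hSb : BddAbove S := ⟨C, by rintro _ ⟨w, I, hI, rfl⟩; exact hC w I hI⟩
  obtain ⟨u, I, hI, hcard⟩ : sSup S ∈ S :=
    Nat.sSup_mem ⟨0, [], ∅, ⟨by simp, by simp⟩, rfl⟩ hSb
  have hinvU : ∀ i, ∀ y ∈ U, f i y ∈ U := fun i y hy => hUsub i (mem_image_of_mem _ hy)
  refine ⟨u.length, u.get, fun x y hxy n hn hu hπxy => ?_⟩
  -- the prefix `a` of `x` before `u`, and the truncation `v` of `y` at the scale of `a u`
  set a : List (Fin N) := List.ofFn fun k : Fin n => x k with ha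
  have hua : u = List.ofFn fun k : Fin u.length => x (n + k) := by
    conv_lhs => rw [← List.ofFn_get u]
    congr 1
    funext j
    exact (hu j).symm
  have hau : ∀ z, listMap f (a ++ u) z = prefixMap f x n
      (prefixMap f (fun k => x (n + k)) u.length z) := by
    intro z
    rw [listMap_append, ha, listMap_ofFn]
    congr 1
    conv_lhs => rw [hua]
    rw [listMap_ofFn f (fun k => x (n + k))]
  have hmem : ∀ x, π x ∈ Λ := coding_mem hlam hf hπ hΛne hΛc.isClosed hΛ
  have hxau : π x ∈ listMap f (a ++ u) '' Λ := by
    refine ⟨π fun k => x (n + (u.length + k)), hmem _, ?_⟩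
    rw [hau, ← coding_eq_prefixMap hf hlam0 hπ (fun k => x (n + k)), ← coding_eq_prefixMap hf hlam0 hπ]
  have hacons : a = x 0 :: (List.ofFn fun k : Fin (n - 1) => x (k + 1)) := by
    obtain ⟨m, rfl⟩ : ∃ m, n = m + 1 := ⟨n - 1, by omega⟩
    rw [ha, List.ofFn_succ]
    simp
  have hlt : listProd lam (a ++ u) < 1 := by
    rw [hacons, List.cons_append, listProd_cons]
    calc _ ≤ lam (x 0) * 1 := mul_le_mul_of_nonneg_left (listProd_le_one hlam _) (hlam0 _).le
      _ < 1 := by rw [mul_one]; exact (hlam _).2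
  have hex : ∃ k, seqProd lam y k ≤ listProd lam (a ++ u) :=
    ((tendsto_seqProd hlam y).eventually_le_const (listProd_pos hlam0 _)).exists
  obtain ⟨k, hk⟩ : ∃ k, Nat.find hex = k + 1 := by
    refine Nat.exists_eq_succ_of_ne_zero fun h0 => ?_
    have := Nat.find_spec hex
    rw [h0] at this
    simp [seqProd] at this
    linarith
  have hk1 : seqProd lam y (k + 1) ≤ listProd lam (a ++ u) := hk ▸ Nat.find_spec hex
  have hk2 : listProd lam (a ++ u) < seqProd lam y k :=
    not_le.1 (Nat.find_min hex (by omega))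
  set v : List (Fin N) := List.ofFn fun j : Fin (k + 1) => y j with hv
  have hvcons : v = y 0 :: (List.ofFn fun j : Fin k => y (j + 1)) := by
    rw [hv, List.ofFn_succ]
    simp
  have hdisj : ∀ b, Disjoint (listMap f (a ++ b) '' U) (listMap f v '' U) := by
    intro b
    refine (hUdisj hxy).mono ?_ ?_
    · rintro _ ⟨z, hz, rfl⟩
      rw [hacons]
      exact ⟨_, listMap_mem hinvU _ hz, rfl⟩
    · rintro _ ⟨z, hz, rfl⟩
      rw [hvcons]
      exact ⟨_, listMap_mem hinvU _ hz, rfl⟩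
  have hainj : Function.Injective fun b => a ++ b := List.append_right_injective a
  set J : Finset (List (Fin N)) := I.map ⟨_, hainj⟩ with hJ
  have hvJ : v ∉ J := by
    intro h
    obtain ⟨b, -, hb⟩ := Finset.mem_map.1 h
    have h1 := hdisj b
    change a ++ b = v at hb
    rw [hb, disjoint_self] at h1
    obtain ⟨z, hz⟩ := hUne
    exact (h1.le ⟨z, hz, rfl⟩ : listMap f v z ∈ (∅ : Set E))
  have hgood : GoodFamily lam f Λ U c (a ++ u) (insert v J) := by
    refine ⟨fun b hb => ?_, ?_⟩
    · rcases Finset.mem_insert.1 hb with rfl | hb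
      · refine ⟨?_, by rwa [hv, listProd_ofFn], π x, ?_, hxau⟩
        · rw [hv, listProd_ofFn, seqProd, Finset.prod_range_succ]
          have h1 := hi₀ (y k)
          have h2 := hlam0 i₀
          calc c * listProd lam (a ++ u) < c * seqProd lam y k :=
                mul_lt_mul_of_pos_left hk2 h2
            _ ≤ lam (y k) * seqProd lam y k :=
                mul_le_mul_of_nonneg_right h1 (seqProd_pos hlam0 y k).le
            _ = _ := mul_comm _ _
        · rw [hπxy, hv, listMap_ofFn]
          exact ⟨_, hmem _, (coding_eq_prefixMap hf hlam0 hπ y (k + 1)).symm⟩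
      · obtain ⟨b, hbI, rfl⟩ := Finset.mem_map.1 hb
        obtain ⟨h1, h2, _, ⟨z, hz, rfl⟩, z', hz', hzz⟩ := hI.1 b hbI
        have hap := listProd_pos hlam0 a
        simp only [Function.Embedding.coeFn_mk, listProd_append]
        refine ⟨by nlinarith, by nlinarith, listMap f a (listMap f b z), ⟨z, hz, ?_⟩, z', hz', ?_⟩
        · exact listMap_append f a b z
        · rw [← hzz]; exact listMap_append f a u z'
    · rw [Finset.coe_insert]
      refine PairwiseDisjoint.insert ?_ ?_
      · intro b hb b' hb' hne
        obtain ⟨b, hbI, rfl⟩ := Finset.mem_map.1 (Finset.mem_coe.1 hb)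
        obtain ⟨b', hbI', rfl⟩ := Finset.mem_map.1 (Finset.mem_coe.1 hb')
        have h1 := hI.2 hbI hbI' fun h => hne (by rw [h])
        have h2 : ∀ b, listMap f (a ++ b) '' U = listMap f a '' (listMap f b '' U) := fun b => by
          rw [image_image]; simp only [listMap_append]
        simp only [Function.onFun, Function.Embedding.coeFn_mk, h2]
        exact (disjoint_image_iff (listMap_injective hlam0 hf a)).2 h1
      · intro b hb _
        obtain ⟨b, hb, rfl⟩ := Finset.mem_map.1 (Finset.mem_coe.1 hb)
        exact (hdisj b).symm
  have hle : (insert v J).card ≤ sSup S := le_csSup hSb ⟨_, _, hgood, rfl⟩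
  rw [Finset.card_insert_of_notMem hvJ, hJ, Finset.card_map, hcard] at hle
  omega

end Separation

/-! ### Sequences of blocks -/

/-- The concatenation `b (ξ 0) b (ξ 1) b (ξ 2) ⋯` of blocks of common length `M`. -/
def blockSeq {N M : ℕ} [NeZero M] {W : Type*} (b : W → Fin M → Fin N) (ξ : ℕ → W) (k : ℕ) :
    Fin N := b (ξ (k / M)) (Fin.ofNat M k)

section Block

variable {N M : ℕ} [NeZero M] {W : Type*} {b : W → Fin M → Fin N}

lemma blockSeq_apply (ξ : ℕ → W) (q : ℕ) (r : Fin M) :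
    blockSeq b ξ (q * M + r) = b (ξ q) r := by
  have hM : 0 < M := NeZero.pos M
  have h1 : (q * M + r) / M = q := by
    rw [mul_comm, Nat.mul_add_div hM, Nat.div_eq_of_lt r.2, add_zero]
  have h2 : Fin.ofNat M (q * M + r) = r := by
    ext
    simp [Fin.ofNat, Nat.mod_eq_of_lt r.2]
  rw [blockSeq, h1, h2]

lemma blockSeq_shift (ξ : ℕ → W) (q : ℕ) :
    (fun k => blockSeq b ξ (q * M + k)) = blockSeq b fun k => ξ (q + k) := by
  have hM : 0 < M := NeZero.pos M
  funext k
  have h1 : (q * M + k) / M = q + k / M := by rw [mul_comm, Nat.mul_add_div hM]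
  have h2 : Fin.ofNat M (q * M + k) = Fin.ofNat M k := by
    ext
    simp [Fin.ofNat]
  rw [blockSeq, h1, h2, blockSeq]

lemma blockSeq_congr {ξ ξ' : ℕ → W} {q : ℕ} (h : ∀ j < q, ξ j = ξ' j) :
    ∀ j < q * M, blockSeq b ξ j = blockSeq b ξ' j := by
  intro j hj
  rw [blockSeq, blockSeq, h _ (Nat.div_lt_of_lt_mul (by rwa [mul_comm] at hj))]

lemma seqProd_blockSeq (r : Fin N → ℝ) (ξ : ℕ → W) (q : ℕ) :
    seqProd r (blockSeq b ξ) (q * M) = ∏ j ∈ Finset.range q, wordProd r (b (ξ j)) := by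
  induction q with
  | zero => simp [seqProd]
  | succ q ih =>
    rw [add_mul, one_mul, seqProd_add, ih, Finset.prod_range_succ, ← wordProd_eq_seqProd]
    congr 2
    funext j
    exact blockSeq_apply ξ q j

/-- Exponential decay of the block probabilities passes to all prefixes, up to a constant. -/
lemma seqProd_blockSeq_le {p : Fin N → ℝ} (hp : ∀ i, 0 < p i) (hp1 : ∀ i, p i ≤ 1) {γ : ℝ}
    (hγ : 0 < γ) (hb : ∀ i, wordProd p (b i) ≤ Real.exp (-γ * M)) (ξ : ℕ → W) (k : ℕ) :
    seqProd p (blockSeq b ξ) k ≤ Real.exp (γ * M) * Real.exp (-γ * k) := by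
  have hM : 0 < M := NeZero.pos M
  have hk : k = k / M * M + k % M := by rw [mul_comm]; exact (Nat.div_add_mod k M).symm
  have h1 : seqProd p (blockSeq b ξ) k ≤ seqProd p (blockSeq b ξ) (k / M * M) := by
    conv_lhs => rw [hk]
    rw [seqProd_add]
    refine mul_le_of_le_one_right (seqProd_pos hp _ _).le ?_
    exact Finset.prod_le_one (fun _ _ => (hp _).le) fun _ _ => hp1 _
  have h2 : seqProd p (blockSeq b ξ) (k / M * M) ≤ Real.exp (-γ * M) ^ (k / M) := by
    rw [seqProd_blockSeq]
    calc _ ≤ ∏ _j ∈ Finset.range (k / M), Real.exp (-γ * M) :=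
          Finset.prod_le_prod (fun _ _ => wordProd_nonneg hp _) fun _ _ => hb _
      _ = _ := by simp
  refine h1.trans (h2.trans ?_)
  rw [← Real.exp_nat_mul, ← Real.exp_add, Real.exp_le_exp]
  have h3 : (k : ℝ) ≤ (k / M : ℕ) * M + M := by
    have := Nat.mod_lt k hM
    exact_mod_cast (show k ≤ k / M * M + M by omega)
  nlinarith

end Block

section BlockGeometry

variable {N n₀ L : ℕ} [NeZero (n₀ + L)] {E : Type*} [MetricSpace E] {lam : Fin N → ℝ}
  {f : Fin N → E → E} {e : E} {π : (ℕ → Fin N) → E} {W : Type*} {b : W → Fin (n₀ + L) → Fin N}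
  {u : Fin L → Fin N}

/-- If every block ends with the separating word, block sequences are the only codes of their
images. -/
lemma blockSeq_unique_code (hlam : ∀ i, 0 < lam i)
    (hf : ∀ i x y, dist (f i x) (f i y) = lam i * dist x y)
    (hπ : ∀ x, Tendsto (fun n => prefixMap f x n e) atTop (𝓝 (π x)))
    (hsep : ∀ x y : ℕ → Fin N, x 0 ≠ y 0 → ∀ n ≥ 1, (∀ j : Fin L, x (n + j) = u j) → π x ≠ π y)
    (hu : ∀ i j, b i (Fin.natAdd n₀ j) = u j) {ξ : ℕ → W} {y : ℕ → Fin N}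
    (h : π (blockSeq b ξ) = π y) : blockSeq b ξ = y := by
  classical
  by_contra hne
  have hex : ∃ k, blockSeq b ξ k ≠ y k := by
    by_contra hcon
    push Not at hcon
    exact hne (funext hcon)
  set k := Nat.find hex with hk
  have hlt : ∀ j < k, blockSeq b ξ j = y j := fun j hj => by
    by_contra hcon
    exact Nat.find_min hex hj hcon
  have hM : 0 < n₀ + L := NeZero.pos _
  -- the separating word occurs in the block following the one containing the index `k`
  set Q := k / (n₀ + L) + 1 with hQ
  have hkQ : k < Q * (n₀ + L) := by
    rw [hQ, add_mul, one_mul]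
    have h1 := Nat.div_add_mod k (n₀ + L)
    have h2 := Nat.mod_lt k hM
    rw [mul_comm] at h1
    omega
  refine hsep (fun j => blockSeq b ξ (k + j)) (fun j => y (k + j)) (Nat.find_spec hex)
    (Q * (n₀ + L) + n₀ - k) (by omega) (fun j => ?_) (coding_shift_eq hf hlam hπ hlt h)
  rw [← hu (ξ Q) j, ← blockSeq_apply (b := b) ξ Q]
  congr 1
  simp only [Fin.val_natAdd]
  omega

/-- Distinct blocks ending with the separating word have pieces at positive distance. -/
lemma exists_block_gap [Finite W] [Nonempty W] [NeZero N] (hlam : ∀ i, lam i ∈ Ioo (0 : ℝ) 1)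
    (hf : ∀ i x y, dist (f i x) (f i y) = lam i * dist x y)
    {Λ : Set E} (hΛne : Λ.Nonempty) (hΛc : IsCompact Λ) (hΛ : Λ = ⋃ i, f i '' Λ)
    (hπ : ∀ x, Tendsto (fun n => prefixMap f x n e) atTop (𝓝 (π x)))
    (hsep : ∀ x y : ℕ → Fin N, x 0 ≠ y 0 → ∀ n ≥ 1, (∀ j : Fin L, x (n + j) = u j) → π x ≠ π y)
    (hu : ∀ i j, b i (Fin.natAdd n₀ j) = u j) (hb : Function.Injective b) :
    ∃ c > 0, ∀ ξ ξ' : ℕ → W, ξ 0 ≠ ξ' 0 → c ≤ dist (π (blockSeq b ξ)) (π (blockSeq b ξ')) := by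
  classical
  have hlam0 : ∀ i, 0 < lam i := fun i => (hlam i).1
  have hmem : ∀ x, π x ∈ Λ := coding_mem hlam hf hπ hΛne hΛc.isClosed hΛ
  set K : W → Set E := fun i => prefixMap f (blockSeq b fun _ => i) (n₀ + L) '' Λ with hK
  have hKc : ∀ i, IsCompact (K i) := fun i => hΛc.image (continuous_prefixMap hf hlam0 _ _)
  have hblk : ∀ (i : W) (j : Fin (n₀ + L)), blockSeq b (fun _ => i) j = b i j := fun i j => by
    have := blockSeq_apply (b := b) (fun _ => i) 0 j
    simpa using this
  have hdisj : ∀ i i', i ≠ i' → Disjoint (K i) (K i') := by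
    intro i i' hne
    rw [Set.disjoint_left]
    rintro z ⟨y, hy, rfl⟩ ⟨y', hy2, hyy⟩
    obtain ⟨η, rfl⟩ := coding_surj hlam hf hπ hΛc.isBounded hΛ hy
    obtain ⟨η', rfl⟩ := coding_surj hlam hf hπ hΛc.isBounded hΛ hy2
    -- `x i η` is the block `b i` followed by the code `η`
    set x : W → (ℕ → Fin N) → ℕ → Fin N := fun i η k =>
      if k < n₀ + L then blockSeq b (fun _ => i) k else η (k - (n₀ + L)) with hx
    have hx1 : ∀ i η, π (x i η) = prefixMap f (blockSeq b fun _ => i) (n₀ + L) (π η) := by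
      intro i η
      rw [coding_eq_prefixMap hf hlam0 hπ (x i η) (n₀ + L), prefixMap_congr f (y := blockSeq b fun _ => i)
        (fun j hj => by simp [hx, hj])]
      congr 2
      funext k
      simp [hx]
    have hxx : π (x i η) = π (x i' η') := by rw [hx1, hx1, hyy]
    have hxb : ∀ i η (j : Fin (n₀ + L)), x i η j = b i j := fun i η j => by
      simp only [hx, j.2, if_true]; exact hblk i j
    have hex : ∃ k, x i η k ≠ x i' η' k := by
      by_contra hcon
      push Not at hcon
      refine hne (hb (funext fun j => ?_))
      rw [← hxb i η, ← hxb i' η', hcon]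
    set k := Nat.find hex with hk
    have hlt : ∀ j < k, x i η j = x i' η' j := fun j hj => by
      by_contra hcon
      exact Nat.find_min hex hj hcon
    have hkn : k < n₀ := by
      by_contra hcon
      push Not at hcon
      refine hne (hb (funext fun j => ?_))
      refine Fin.addCases (fun j => ?_) (fun j => ?_) j
      · have := hlt j (lt_of_lt_of_le j.2 hcon)
        have e1 := hxb i η (Fin.castAdd L j)
        have e2 := hxb i' η' (Fin.castAdd L j)
        simp only [Fin.val_castAdd] at e1 e2
        rw [← e1, ← e2, this]
      · rw [hu, hu]
    refine hsep (fun j => x i η (k + j)) (fun j => x i' η' (k + j)) (Nat.find_spec hex)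
      (n₀ - k) (by omega) (fun j => ?_) (coding_shift_eq hf hlam0 hπ hlt hxx)
    have e1 := hxb i η (Fin.natAdd n₀ j)
    rw [hu] at e1
    rw [← e1]
    congr 1
    simp only [Fin.val_natAdd]
    omega
  have hgap : ∀ q : W × W, ∃ c > 0, q.1 ≠ q.2 → ∀ z ∈ K q.1, ∀ z' ∈ K q.2, c ≤ dist z z' := by
    rintro ⟨i, i'⟩
    by_cases hii : i = i'
    · exact ⟨1, one_pos, fun h => absurd hii h⟩
    · obtain ⟨δ, hδ, hd⟩ := (hdisj i i' hii).exists_thickenings (hKc i) (hKc i').isClosed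
      refine ⟨δ, hδ, fun _ z hz z' hz' => ?_⟩
      by_contra hcon
      push Not at hcon
      exact Set.disjoint_left.1 hd (Metric.mem_thickening_iff.2 ⟨z, hz, by rwa [dist_comm]⟩)
        (Metric.self_subset_thickening hδ _ hz')
  choose c hc0 hc using hgap
  obtain ⟨q, hq⟩ := Finite.exists_min c
  refine ⟨c q, hc0 q, fun ξ ξ' h0 => (hq (ξ 0, ξ' 0)).trans ?_⟩
  have hin : ∀ ξ : ℕ → W, π (blockSeq b ξ) ∈ K (ξ 0) := by
    intro ξ
    refine ⟨_, hmem fun k => blockSeq b ξ (n₀ + L + k), ?_⟩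
    rw [prefixMap_congr f (y := blockSeq b ξ), ← coding_eq_prefixMap hf hlam0 hπ]
    intro j hj
    have h1 := blockSeq_apply (b := b) ξ 0 ⟨j, hj⟩
    have h2 := hblk (ξ 0) ⟨j, hj⟩
    simp only [zero_mul, zero_add] at h1
    rw [h1, h2]
  exact hc (ξ 0, ξ' 0) h0 _ (hin ξ) _ (hin ξ')

end BlockGeometry

/-! ### A measure on block sequences -/

lemma measurable_coding {N : ℕ} {E : Type*} [MetricSpace E] [MeasurableSpace E] [BorelSpace E]
    {f : Fin N → E → E} {e : E} {π : (ℕ → Fin N) → E} (hfc : ∀ i, Continuous (f i))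
    (hπ : ∀ x, Tendsto (fun n => prefixMap f x n e) atTop (𝓝 (π x))) : Measurable π := by
  refine measurable_of_tendsto_metrizable (f := fun n x => prefixMap f x n e) (fun n => ?_)
    (tendsto_pi_nhds.2 hπ)
  induction n with
  | zero => exact measurable_const
  | succ n ih =>
    have h1 : Measurable fun q : Fin N × E => f q.1 q.2 :=
      measurable_from_prod_countable_right fun i => (hfc i).measurable
    have h2 : Measurable fun x : ℕ → Fin N => fun k => x (k + 1) :=
      measurable_pi_lambda _ fun k => measurable_pi_apply (k + 1)
    exact h1.comp ((measurable_pi_apply 0).prodMk (ih.comp h2))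

/-- A fixed sequence whose prefixes have probability `O (exp (-γ k))`, `γ > α`, is almost surely
not covered, by the Borel–Cantelli lemma. -/
lemma ae_notMem_limsupCylinders {N : ℕ} {p : Fin N → ℝ} (hp : ∀ i, 0 < p i)
    {μ : Measure (ℕ → Fin N)} [IsProbabilityMeasure μ]
    (hμ : ∀ (m : ℕ) (w : Fin m → Fin N), μ (_root_.cylinder w) = ENNReal.ofReal (wordProd p w))
    {α : ℝ} (hα : 0 < α) {ℓ : ℕ → ℕ}
    (hℓ : liminf (fun n : ℕ => (ℓ n : ℝ) / Real.log n) atTop = 1 / α)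
    {γ C : ℝ} (hγ : α < γ) {x : ℕ → Fin N}
    (hx : ∀ k : ℕ, seqProd p x k ≤ C * Real.exp (-γ * k)) :
    ∀ᵐ o ∂μ, x ∉ limsupCylinders ℓ o := by
  have hC : 0 < C := by
    have h1 := hx 0
    simp [seqProd] at h1
    linarith
  set c := (α + γ) / 2 with hc
  have hc0 : 0 < c := by linarith
  have hreal : ∀ n, μ.real {o | ∀ j : Fin (ℓ n), o (n + j) = x j} = seqProd p x (ℓ n) := fun n => by
    rw [measureReal_window hp hμ n (ℓ n) (fun j => x j), wordProd_eq_seqProd]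
  have hsum : Summable fun n => μ.real {o | ∀ j : Fin (ℓ n), o (n + j) = x j} := by
    have h1 : Summable fun n : ℕ => C * (n : ℝ) ^ (-(γ / c)) :=
      (Real.summable_nat_rpow.2 (by
        have : 1 < γ / c := by rw [one_lt_div hc0]; linarith
        linarith)).mul_left C
    refine h1.of_norm_bounded_eventually_nat ?_
    filter_upwards [eventually_le_of_liminf hα hℓ (show α < c by linarith),
      eventually_gt_atTop 0] with n hn hn0
    rw [hreal, Real.norm_of_nonneg (seqProd_pos hp _ _).le]
    refine (hx _).trans (mul_le_mul_of_nonneg_left ?_ hC.le)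
    rw [Real.rpow_def_of_pos (by exact_mod_cast hn0), Real.exp_le_exp]
    have h2 : γ / c * Real.log n ≤ γ / c * (c * ℓ n) :=
      mul_le_mul_of_nonneg_left hn (div_pos (by linarith) hc0).le
    have h3 : γ / c * (c * ℓ n) = γ * ℓ n := by field_simp
    linarith
  have htop : ∑' n, μ {o | ∀ j : Fin (ℓ n), o (n + j) = x j} ≠ ∞ := by
    have h1 := hsum.tsum_ofReal_ne_top
    simpa only [measureReal_def, ENNReal.ofReal_toReal (measure_ne_top μ _)] using h1
  filter_upwards [ae_eventually_notMem htop] with o ho hmem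
  obtain ⟨k, hk⟩ := eventually_atTop.1 ho
  have h1 := mem_iInter.1 hmem k
  simp only [mem_iUnion] at h1
  obtain ⟨n, hn, h2⟩ := h1
  exact hk n hn fun j => (h2 j).symm

lemma exists_weight_measure {W : Type*} [Fintype W] [MeasurableSpace W] [DiscreteMeasurableSpace W]
    {ρ : W → ℝ} (hρ0 : ∀ i, 0 ≤ ρ i) (hρ : ∑ i, ρ i = 1) :
    ∃ κ : Measure W, IsProbabilityMeasure κ ∧ ∀ i, κ {i} = ENNReal.ofReal (ρ i) := by
  classical
  refine ⟨∑ i, ENNReal.ofReal (ρ i) • Measure.dirac i, ⟨?_⟩, fun i => ?_⟩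
  · simp only [Measure.coe_finsetSum, Finset.sum_apply, Measure.smul_apply, measure_univ,
      smul_eq_mul, mul_one]
    rw [← ENNReal.ofReal_sum_of_nonneg fun i _ => hρ0 i, hρ, ENNReal.ofReal_one]
  · simp [Measure.dirac_apply' _ (measurableSet_singleton i), Set.indicator_apply]

/-- Mass distribution principle: if the weights of the letters are at most the `s`-th powers of
the contraction ratios of their blocks, and pieces of distinct blocks are `c`-separated, then the
image of the product measure is at most `c ^ (-s)` times the `s`-dimensional Hausdorff measure. -/
lemma mass_distribution {N M : ℕ} [NeZero M] [NeZero N] {E : Type*} [MetricSpace E]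
    [MeasurableSpace E] [BorelSpace E] {lam : Fin N → ℝ} {f : Fin N → E → E} {e : E}
    {π : (ℕ → Fin N) → E} (hlam : ∀ i, lam i ∈ Ioo (0 : ℝ) 1)
    (hf : ∀ i x y, dist (f i x) (f i y) = lam i * dist x y)
    (hπ : ∀ x, Tendsto (fun n => prefixMap f x n e) atTop (𝓝 (π x)))
    {W : Type*} [Finite W] [MeasurableSpace W] [DiscreteMeasurableSpace W]
    {b : W → Fin M → Fin N} (κ : Measure W) [IsProbabilityMeasure κ] {s : ℝ} (hs : 0 < s)
    (hκ : ∀ i, κ {i} ≤ ENNReal.ofReal (wordProd lam (b i) ^ s)) {c : ℝ} (hc : 0 < c)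
    (hgap : ∀ ξ ξ' : ℕ → W, ξ 0 ≠ ξ' 0 → c ≤ dist (π (blockSeq b ξ)) (π (blockSeq b ξ')))
    (A : Set E) :
    ENNReal.ofReal c ^ s *
      Measure.infinitePi (fun _ : ℕ => κ) ((fun ξ => π (blockSeq b ξ)) ⁻¹' A) ≤ μH[s] A := by
  classical
  have hlam0 : ∀ i, 0 < lam i := fun i => (hlam i).1
  set ν := Measure.infinitePi (fun _ : ℕ => κ) with hν
  set F : (ℕ → W) → E := fun ξ => π (blockSeq b ξ) with hF
  have hblockm : Measurable (blockSeq b) := measurable_pi_lambda _ fun k =>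
    (measurable_of_finite fun i : W => b i (Fin.ofNat M k)).comp (measurable_pi_apply (k / M))
  have hFm : Measurable F :=
    (measurable_coding (continuous_of_similarity hf hlam0) hπ).comp hblockm
  have hcyl : ∀ (ξ : ℕ → W) (k : ℕ), ν {η | ∀ j < k, η j = ξ j} ≤
      ENNReal.ofReal (seqProd lam (blockSeq b ξ) (k * M)) ^ s := by
    intro ξ k
    have hset : {η : ℕ → W | ∀ j < k, η j = ξ j} =
        ((Finset.range k : Finset ℕ) : Set ℕ).pi fun j => {ξ j} := by
      ext η; simp [Set.mem_pi]
    rw [hset, hν, Measure.infinitePi_pi _ fun _ _ => measurableSet_singleton _, seqProd_blockSeq,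
      ENNReal.ofReal_rpow_of_nonneg (Finset.prod_nonneg fun _ _ => (wordProd_nonneg hlam0 _)) hs.le,
      ← Real.finsetProd_rpow _ _ fun _ _ => wordProd_nonneg hlam0 _,
      ENNReal.ofReal_prod_of_nonneg fun _ _ => Real.rpow_nonneg (wordProd_nonneg hlam0 _) _]
    exact Finset.prod_le_prod' fun j _ => hκ _
  have hball : ∀ B : Set E, ENNReal.ofReal c ^ s * ν (F ⁻¹' B) ≤ Metric.ediam B ^ s := by
    intro B
    by_cases hex : ∃ k, ∃ ξ ∈ F ⁻¹' B, ∃ ξ' ∈ F ⁻¹' B, ξ k ≠ ξ' k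
    · obtain ⟨ξ, hξ, ξ', hξ', hk⟩ := Nat.find_spec hex
      set k := Nat.find hex
      have hagree : ∀ η ∈ F ⁻¹' B, ∀ j < k, η j = ξ j := by
        intro η hη j hj
        by_contra hcon
        exact Nat.find_min hex hj ⟨η, hη, ξ, hξ, hcon⟩
      have h1 : ν (F ⁻¹' B) ≤ ENNReal.ofReal (seqProd lam (blockSeq b ξ) (k * M)) ^ s :=
        (measure_mono hagree).trans (hcyl ξ k)
      have h2 : seqProd lam (blockSeq b ξ) (k * M) * c ≤ dist (F ξ) (F ξ') := by
        rw [hF]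
        simp only []
        rw [dist_coding hf hlam0 hπ (n := k * M)
          (blockSeq_congr fun j hj => (hagree ξ' hξ' j hj).symm), blockSeq_shift, blockSeq_shift]
        exact mul_le_mul_of_nonneg_left (hgap _ _ (by simpa using hk))
          (seqProd_pos hlam0 _ _).le
      calc ENNReal.ofReal c ^ s * ν (F ⁻¹' B)
          ≤ ENNReal.ofReal c ^ s * ENNReal.ofReal (seqProd lam (blockSeq b ξ) (k * M)) ^ s := by
            gcongr
        _ = ENNReal.ofReal (seqProd lam (blockSeq b ξ) (k * M) * c) ^ s := by
            rw [← ENNReal.mul_rpow_of_nonneg _ _ hs.le, ← ENNReal.ofReal_mul hc.le, mul_comm]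
        _ ≤ edist (F ξ) (F ξ') ^ s := by
            rw [edist_dist]
            exact ENNReal.rpow_le_rpow (ENNReal.ofReal_le_ofReal h2) hs.le
        _ ≤ _ := ENNReal.rpow_le_rpow (Metric.edist_le_ediam_of_mem hξ hξ') hs.le
    · -- at most one sequence: its mass vanishes
      push Not at hex
      have hzero : ν (F ⁻¹' B) = 0 := by
        rcases (F ⁻¹' B).eq_empty_or_nonempty with h | ⟨ξ, hξ⟩
        · rw [h, measure_empty]
        · have hlim : Tendsto (fun k : ℕ =>
              ENNReal.ofReal (seqProd lam (blockSeq b ξ) (k * M)) ^ s) atTop (𝓝 0) := by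
            have h1 := (tendsto_seqProd hlam (blockSeq b ξ)).comp
              (tendsto_id.atTop_mul_const' (NeZero.pos M))
            have h2 := (ENNReal.tendsto_ofReal h1).ennrpow_const s
            simpa [ENNReal.zero_rpow_of_pos hs, Function.comp_def] using h2
          refine le_antisymm (ge_of_tendsto' hlim fun k => ?_) (zero_le)
          have hsub : F ⁻¹' B ⊆ {η | ∀ j < k, η j = ξ j} := fun η hη j _ => hex j η hη ξ hξ
          exact (measure_mono hsub).trans (hcyl ξ k)
      rw [hzero, mul_zero]
      exact zero_le
  have hle : (ENNReal.ofReal c ^ s) • Measure.map F ν ≤ μH[s] := by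
    refine Measure.le_hausdorffMeasure s _ 1 one_pos fun B _ => ?_
    calc ((ENNReal.ofReal c ^ s) • Measure.map F ν) B
        ≤ ((ENNReal.ofReal c ^ s) • Measure.map F ν) (closure B) := measure_mono subset_closure
      _ = ENNReal.ofReal c ^ s * ν (F ⁻¹' closure B) := by
          rw [Measure.smul_apply, Measure.map_apply hFm isClosed_closure.measurableSet, smul_eq_mul]
      _ ≤ _ := by rw [← Metric.ediam_closure B]; exact hball _
  calc _ ≤ ENNReal.ofReal c ^ s * Measure.map F ν A := by
        gcongr; exact Measure.le_map_apply hFm.aemeasurable A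
    _ = ((ENNReal.ofReal c ^ s) • Measure.map F ν) A := by rw [Measure.smul_apply, smul_eq_mul]
    _ ≤ _ := hle A

/-! ### The lower bound -/

lemma wordProd_append {N m n : ℕ} (r : Fin N → ℝ) (v : Fin m → Fin N) (w : Fin n → Fin N) :
    wordProd r (Fin.append v w) = wordProd r v * wordProd r w := by
  simp [wordProd, Fin.prod_univ_add]

lemma measurableSet_blockSeq_limsup {N M : ℕ} [NeZero M] {W : Type*} [Finite W]
    [MeasurableSpace W] [DiscreteMeasurableSpace W] (b : W → Fin M → Fin N) (ℓ : ℕ → ℕ) :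
    MeasurableSet {q : (ℕ → W) × (ℕ → Fin N) | blockSeq b q.1 ∉ limsupCylinders ℓ q.2} := by
  have hblock : ∀ k, Measurable fun ξ : ℕ → W => blockSeq b ξ k := fun k =>
    (measurable_of_finite fun i : W => b i (Fin.ofNat M k)).comp (measurable_pi_apply (k / M))
  have h : {q : (ℕ → W) × (ℕ → Fin N) | blockSeq b q.1 ∉ limsupCylinders ℓ q.2} =
      (⋂ k, ⋃ n, ⋃ _ : k ≤ n, ⋂ j : Fin (ℓ n),
        {q : (ℕ → W) × (ℕ → Fin N) | blockSeq b q.1 j = q.2 (n + j)})ᶜ := by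
    ext q
    simp [limsupCylinders, _root_.cylinder]
  rw [h]
  refine (MeasurableSet.iInter fun k => MeasurableSet.iUnion fun n => MeasurableSet.iUnion fun _ =>
    MeasurableSet.iInter fun j => ?_).compl
  exact measurableSet_eq_fun ((hblock j).comp measurable_fst)
    ((measurable_pi_apply (n + (j : ℕ))).comp measurable_snd)

/-- Lower bound at every `s` for which the pressure sum exceeds `1` on `q ≤ 0`. The rich words,
each followed by the separating word, are the blocks of a self-similar subset whose codes are
almost surely uncovered. -/
lemma ae_le_dimH {N : ℕ} [NeZero N] {E : Type*} [NormedAddCommGroup E] [NormedSpace ℝ E]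
    [FiniteDimensional ℝ E] {lam p : Fin N → ℝ} (hlam : ∀ i, lam i ∈ Ioo (0 : ℝ) 1)
    (hp : ∀ i, 0 < p i) (hpsum : ∑ i, p i = 1)
    {f : Fin N → E → E} (hf : ∀ i x y, dist (f i x) (f i y) = lam i * dist x y) {Λ U : Set E}
    (hΛne : Λ.Nonempty) (hΛc : IsCompact Λ) (hΛ : Λ = ⋃ i, f i '' Λ)
    (hUne : U.Nonempty) (hUo : IsOpen U) (hUb : Bornology.IsBounded U)
    (hUsub : ∀ i, f i '' U ⊆ U) (hUdisj : Pairwise fun i j => Disjoint (f i '' U) (f j '' U))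
    {e : E} {π : (ℕ → Fin N) → E}
    (hπ : ∀ x, Tendsto (fun n => prefixMap f x n e) atTop (𝓝 (π x)))
    {μ : Measure (ℕ → Fin N)} [IsProbabilityMeasure μ]
    (hμ : ∀ (m : ℕ) (w : Fin m → Fin N), μ (_root_.cylinder w) = ENNReal.ofReal (wordProd p w))
    {α : ℝ} (hα : 0 < α) {ℓ : ℕ → ℕ}
    (hℓ : liminf (fun n : ℕ => (ℓ n : ℝ) / Real.log n) atTop = 1 / α)
    (hX : ∃ i, p i * Real.exp α < 1) {s : ℝ} (hs : 0 < s)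
    (hgt : ∀ q : ℝ, q ≤ 0 → 1 < ∑ i, lam i ^ s * (p i * Real.exp α) ^ q) :
    ∀ᵐ o ∂μ, ENNReal.ofReal s ≤ dimH (Λ \ π '' limsupCylinders ℓ o) := by
  classical
  borelize E
  have hlam0 : ∀ i, 0 < lam i := fun i => (hlam i).1
  have hp1 : ∀ i, p i ≤ 1 := fun i => by
    rw [← hpsum]
    exact Finset.single_le_sum (fun j _ => (hp j).le) (Finset.mem_univ i)
  obtain ⟨L, u, hsep⟩ := exists_separating_word hlam hf hΛne hΛc hΛ hUne hUo hUb hUsub hUdisj hπ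
  obtain ⟨ε, hε, hrich⟩ := exists_rich_words hlam0 hp hX hgt
  have huP : 0 < wordProd lam u ^ s :=
    Real.rpow_pos_of_pos (Finset.prod_pos fun _ _ => hlam0 _) s
  -- half of `ε` pays for the separating word
  set γ := α + ε / 2 with hγ
  have hlen : ∀ᶠ n : ℕ in atTop, γ * L ≤ ε / 2 * n :=
    (tendsto_natCast_atTop_atTop.const_mul_atTop (half_pos hε)).eventually_ge_atTop _
  obtain ⟨n₀, ⟨hsum, hn₀⟩, hn₀1⟩ := (((hrich (wordProd lam u ^ s)⁻¹).and hlen).and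
    (eventually_ge_atTop 1)).exists
  have : NeZero (n₀ + L) := ⟨by omega⟩
  set W := {w : Fin n₀ → Fin N // wordProd p w ≤ Real.exp (-(α + ε) * n₀)} with hW
  letI : MeasurableSpace W := ⊤
  have : DiscreteMeasurableSpace W := ⟨fun _ => trivial⟩
  set b : W → Fin (n₀ + L) → Fin N := fun w => Fin.append w.1 u with hb
  have hbu : ∀ i j, b i (Fin.natAdd n₀ j) = u j := fun i j => Fin.append_right _ _ _
  have hbinj : Function.Injective b := by
    intro i i' h
    refine Subtype.ext (funext fun j => ?_)
    have := congrFun h (Fin.castAdd L j)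
    simpa [hb, Fin.append_left] using this
  have hbp : ∀ i, wordProd p (b i) ≤ Real.exp (-γ * (n₀ + L : ℕ)) := by
    intro i
    have h1 : wordProd p u ≤ 1 := Finset.prod_le_one (fun _ _ => (hp _).le) fun _ _ => hp1 _
    calc wordProd p (b i) = wordProd p i.1 * wordProd p u := wordProd_append _ _ _
      _ ≤ wordProd p i.1 := mul_le_of_le_one_right (wordProd_nonneg hp _) h1
      _ ≤ Real.exp (-(α + ε) * n₀) := i.2
      _ ≤ _ := by
        rw [Real.exp_le_exp]
        push_cast
        rw [hγ] at hn₀ ⊢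
        nlinarith
  set Z := ∑ i : W, wordProd lam (b i) ^ s with hZ
  have hZ1 : 1 ≤ Z := by
    have h1 : Z = (∑ w : Fin n₀ → Fin N, if wordProd p w ≤ Real.exp (-(α + ε) * n₀) then
        wordProd lam w ^ s else 0) * wordProd lam u ^ s := by
      rw [← Finset.sum_filter, Finset.sum_mul, hZ,
        Finset.sum_subtype (p := fun w : Fin n₀ → Fin N =>
          wordProd p w ≤ Real.exp (-(α + ε) * n₀)) _ (by simp)]
      refine Finset.sum_congr rfl fun i _ => ?_
      rw [hb]
      simp only []
      rw [wordProd_append, Real.mul_rpow (wordProd_nonneg hlam0 _) (wordProd_nonneg hlam0 _)]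
    rw [h1]
    rw [inv_le_iff_one_le_mul₀ huP] at hsum
    exact hsum
  have hZ0 : 0 < Z := by linarith
  have hnn : ∀ i, 0 ≤ wordProd lam (b i) ^ s := fun i =>
    Real.rpow_nonneg (wordProd_nonneg hlam0 _) s
  have : Nonempty W := by
    by_contra hcon
    rw [not_nonempty_iff] at hcon
    rw [hZ, Finset.univ_eq_empty, Finset.sum_empty] at hZ0
    exact lt_irrefl _ hZ0
  obtain ⟨κ, hκ, hκi⟩ := exists_weight_measure (ρ := fun i : W => wordProd lam (b i) ^ s / Z)
    (fun i => div_nonneg (hnn i) hZ0.le) (by rw [← Finset.sum_div]; exact div_self hZ0.ne')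
  obtain ⟨c, hc, hgap⟩ := exists_block_gap hlam hf hΛne hΛc hΛ hπ hsep hbu hbinj
  set ν := Measure.infinitePi (fun _ : ℕ => κ) with hν
  have hfub : ∀ᵐ o ∂μ, ∀ᵐ ξ ∂ν, blockSeq b ξ ∉ limsupCylinders ℓ o := by
    rw [← Measure.ae_ae_comm (measurableSet_blockSeq_limsup b ℓ)]
    refine Eventually.of_forall fun ξ => ?_
    exact ae_notMem_limsupCylinders hp hμ hα hℓ (show α < γ by linarith)
      (seqProd_blockSeq_le hp hp1 (by linarith) hbp ξ)
  filter_upwards [hfub] with o ho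
  have hmem : ∀ x, π x ∈ Λ := coding_mem hlam hf hπ hΛne hΛc.isClosed hΛ
  have h1 : ∀ᵐ ξ ∂ν, ξ ∈ (fun ξ => π (blockSeq b ξ)) ⁻¹' (Λ \ π '' limsupCylinders ℓ o) := by
    filter_upwards [ho] with ξ hξ
    refine ⟨hmem _, ?_⟩
    rintro ⟨y, hy, hyξ⟩
    rw [blockSeq_unique_code hlam0 hf hπ hsep hbu hyξ.symm] at hξ
    exact hξ hy
  have h2 := mass_distribution hlam hf hπ κ hs (b := b) (fun i => by
    rw [hκi]
    exact ENNReal.ofReal_le_ofReal (div_le_self (hnn i) hZ1)) hc hgap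
    (Λ \ π '' limsupCylinders ℓ o)
  have hone : ν ((fun ξ => π (blockSeq b ξ)) ⁻¹' (Λ \ π '' limsupCylinders ℓ o)) = 1 := by
    exact (measure_congr (eventuallyEq_univ.2 h1)).trans measure_univ
  rw [← hν, hone] at h2
  have h3 : μH[s] (Λ \ π '' limsupCylinders ℓ o) ≠ 0 := by
    refine (lt_of_lt_of_le ?_ h2).ne'
    rw [mul_one]
    exact ENNReal.rpow_pos (ENNReal.ofReal_pos.2 hc) ENNReal.ofReal_ne_top
  exact le_dimH_of_hausdorffMeasure_ne_zero (d := s.toNNReal)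
    (s := Λ \ π '' limsupCylinders ℓ o) (by rwa [Real.coe_toNNReal s hs.le])

/-! ### The pressure function -/

section Pressure

variable {N : ℕ} {lam p : Fin N → ℝ} {α : ℝ} {P : ℝ → ℝ}

/-- The pressure sum is strictly decreasing in the exponent `s` of the contraction ratios. -/
lemma pressure_sum_strictAnti [NeZero N] (hlam : ∀ i, lam i ∈ Ioo (0 : ℝ) 1) (hp : ∀ i, 0 < p i) (a q : ℝ) :
    StrictAnti fun s : ℝ => ∑ i, lam i ^ s * (p i * Real.exp a) ^ q := by
  intro s t hst
  refine Finset.sum_lt_sum_of_nonempty Finset.univ_nonempty fun i _ => ?_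
  exact mul_lt_mul_of_pos_right (Real.rpow_lt_rpow_of_exponent_gt (hlam i).1 (hlam i).2 hst)
    (Real.rpow_pos_of_pos (mul_pos (hp i) (Real.exp_pos _)) _)

lemma pressure_pos (hlam : ∀ i, lam i ∈ Ioo (0 : ℝ) 1) (hp : ∀ i, 0 < p i)
    (hP : ∀ q : ℝ, ∑ i, lam i ^ P q * (p i * Real.exp α) ^ q = 1)
    (hX : ∃ i, p i * Real.exp α < 1) {q : ℝ} (hq : q < 0) : 0 < P q := by
  by_contra hcon
  push Not at hcon
  obtain ⟨i, hi⟩ := hX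
  have hpos : ∀ i, 0 < p i * Real.exp α := fun i => mul_pos (hp i) (Real.exp_pos _)
  have h1 : lam i ^ P q * (p i * Real.exp α) ^ q ≤ 1 := by
    rw [← hP q]
    exact Finset.single_le_sum (f := fun i => lam i ^ P q * (p i * Real.exp α) ^ q)
      (fun j _ => mul_nonneg (Real.rpow_nonneg (hlam j).1.le _) (Real.rpow_nonneg (hpos j).le _))
      (Finset.mem_univ i)
  have h2 : 1 ≤ lam i ^ P q := Real.one_le_rpow_of_pos_of_le_one_of_nonpos (hlam i).1
    (hlam i).2.le hcon
  have h3 : 1 < (p i * Real.exp α) ^ q := Real.one_lt_rpow_of_pos_of_lt_one_of_neg (hpos i) hi hq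
  nlinarith

/-- Below the infimum of the pressure, the pressure sum exceeds `1` for every `q ≤ 0`; the value
`q = 0` is reached as a limit. -/
lemma one_lt_pressure_sum [NeZero N] (hlam : ∀ i, lam i ∈ Ioo (0 : ℝ) 1) (hp : ∀ i, 0 < p i)
    (hP : ∀ q : ℝ, ∑ i, lam i ^ P q * (p i * Real.exp α) ^ q = 1)
    (hX : ∃ i, p i * Real.exp α < 1) {s : ℝ} (hs : s < sInf (P '' Iio 0)) (q : ℝ) (hq : q ≤ 0) :
    1 < ∑ i, lam i ^ s * (p i * Real.exp α) ^ q := by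
  have hbdd : BddBelow (P '' Iio 0) :=
    ⟨0, by rintro _ ⟨q, hq, rfl⟩; exact (pressure_pos hlam hp hP hX hq).le⟩
  have hpos : ∀ i, 0 < p i * Real.exp α := fun i => mul_pos (hp i) (Real.exp_pos _)
  have hneg : ∀ t ≤ sInf (P '' Iio 0), ∀ q : ℝ, q < 0 →
      1 ≤ ∑ i, lam i ^ t * (p i * Real.exp α) ^ q := by
    intro t ht q hq
    rw [← hP q]
    exact (pressure_sum_strictAnti hlam hp α q).antitone
      (ht.trans (csInf_le hbdd (mem_image_of_mem P hq)))
  refine lt_of_le_of_lt ?_ (pressure_sum_strictAnti hlam hp α q hs)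
  rcases hq.lt_or_eq with h | rfl
  · exact hneg _ le_rfl q h
  · have hcont : Continuous fun q : ℝ =>
        ∑ i, lam i ^ sInf (P '' Iio 0) * (p i * Real.exp α) ^ q :=
      continuous_finsetSum _ fun i _ => continuous_const.mul
        (Real.continuous_const_rpow (hpos i).ne')
    have hlim := (hcont.tendsto 0).mono_left (nhdsWithin_le_nhds (s := Iio (0 : ℝ)))
    refine ge_of_tendsto hlim ?_
    filter_upwards [self_mem_nhdsWithin] with q hq using hneg _ le_rfl q hq

/-- Above the infimum of the pressure, some pressure sum with `q < 0` is below `1`, even after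
`α` is replaced by a slightly smaller exponent. -/
lemma exists_pressure_sum_lt [NeZero N] (hlam : ∀ i, lam i ∈ Ioo (0 : ℝ) 1) (hp : ∀ i, 0 < p i)
    (hα : 0 < α) (hP : ∀ q : ℝ, ∑ i, lam i ^ P q * (p i * Real.exp α) ^ q = 1)
    {s : ℝ} (hs : sInf (P '' Iio 0) < s) :
    ∃ q : ℝ, q < 0 ∧ ∃ a, 0 < a ∧ a < α ∧ ∑ i, lam i ^ s * (p i * Real.exp a) ^ q < 1 := by
  obtain ⟨_, ⟨q, hq, rfl⟩, hqs⟩ :=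
    exists_lt_of_csInf_lt ((nonempty_Iio (a := (0 : ℝ))).image P) hs
  refine ⟨q, hq, ?_⟩
  have h1 : ∑ i, lam i ^ s * (p i * Real.exp α) ^ q < 1 := by
    rw [← hP q]; exact pressure_sum_strictAnti hlam hp α q hqs
  have hcont : Continuous fun a : ℝ => ∑ i, lam i ^ s * (p i * Real.exp a) ^ q :=
    continuous_finsetSum _ fun i _ => continuous_const.mul
      ((continuous_const.mul Real.continuous_exp).rpow_const
        fun a => .inl (mul_pos (hp i) (Real.exp_pos a)).ne')
  have hlim := (hcont.tendsto α).mono_left (nhdsWithin_le_nhds (s := Iio α))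
  obtain ⟨a, ⟨ha1, ha2⟩, ha3⟩ := (((hlim.eventually_lt_const h1).and self_mem_nhdsWithin).and
    (nhdsWithin_le_nhds (Ioi_mem_nhds hα))).exists
  exact ⟨a, ha3, ha2, ha1⟩

end Pressure

/-! ### The dimension formula -/

/-- Dimension of the complement of the dynamical covering set:
`dim_H (Λ ∖ R(ō,ℓ)) = inf_(q<0) P_α(q)` for `ℙ_p`-a.e. `ō`, when `0 < α < −log p_min`. -/
theorem dimH_coverSet_compl {N d : ℕ} [NeZero N] (hN : 2 ≤ N)
    (lam p : Fin N → ℝ)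
    (hlam : ∀ i, lam i ∈ Set.Ioo (0 : ℝ) 1)
    (hp : ∀ i, 0 < p i) (hpsum : ∑ i, p i = 1)
    (f : Fin N → EuclideanSpace ℝ (Fin d) → EuclideanSpace ℝ (Fin d))
    (hf : ∀ i x y, dist (f i x) (f i y) = lam i * dist x y)
    (Λ : Set (EuclideanSpace ℝ (Fin d)))
    (hΛne : Λ.Nonempty) (hΛc : IsCompact Λ) (hΛ : Λ = ⋃ i, f i '' Λ)
    (U : Set (EuclideanSpace ℝ (Fin d)))
    (hUne : U.Nonempty) (hUo : IsOpen U) (hUb : Bornology.IsBounded U)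
    (hUsub : ∀ i, f i '' U ⊆ U)
    (hUdisj : Pairwise fun i j => Disjoint (f i '' U) (f j '' U))
    (π : (ℕ → Fin N) → EuclideanSpace ℝ (Fin d))
    (hπ : ∀ x, Filter.Tendsto (fun n => prefixMap f x n 0) Filter.atTop (nhds (π x)))
    (μ : Measure (ℕ → Fin N)) [IsProbabilityMeasure μ]
    (hμ : ∀ (m : ℕ) (w : Fin m → Fin N), μ (cylinder w) = ENNReal.ofReal (wordProd p w))
    (α : ℝ) (hα : 0 < α)
    (ℓ : ℕ → ℕ) (hℓmono : Monotone ℓ)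
    (hℓ : Filter.liminf (fun n : ℕ => (ℓ n : ℝ) / Real.log n) Filter.atTop = 1 / α)
    (P : ℝ → ℝ)
    (hP : ∀ q : ℝ, ∑ i, lam i ^ P q * (p i * Real.exp α) ^ q = 1)
    (hα2 : α < -Real.log (⨅ i, p i)) :
    ∀ᵐ o ∂μ, dimH (Λ \ π '' limsupCylinders ℓ o)
      = ENNReal.ofReal (sInf (P '' Set.Iio 0)) := by
  have hlam0 : ∀ i, 0 < lam i := fun i => (hlam i).1
  have hmem : ∀ x, π x ∈ Λ := coding_mem hlam hf hπ hΛne hΛc.isClosed hΛ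
  have hX : ∃ i, p i * Real.exp α < 1 := by
    obtain ⟨i, hi⟩ := Finite.exists_min p
    refine ⟨i, ?_⟩
    have h1 : p i ≤ ⨅ i, p i := le_ciInf hi
    have h2 : Real.log (p i) ≤ Real.log (⨅ i, p i) := Real.log_le_log (hp i) h1
    rw [← Real.exp_log (hp i), ← Real.exp_add, Real.exp_lt_one_iff]
    linarith
  have hnonneg : 0 ≤ sInf (P '' Set.Iio 0) := by
    refine le_csInf (nonempty_Iio.image P) ?_
    rintro _ ⟨q, hq, rfl⟩
    exact (pressure_pos hlam hp hP hX hq).le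
  set t := sInf (P '' Set.Iio 0) with ht
  have hupper : ∀ j : ℕ, ∀ᵐ o ∂μ,
      dimH (Λ \ π '' limsupCylinders ℓ o) ≤ ENNReal.ofReal (t + 1 / ((j : ℝ) + 1)) := by
    intro j
    have hj : 0 < 1 / ((j : ℝ) + 1) := Nat.one_div_pos_of_nat
    obtain ⟨q, hq, a, ha, haα, hsum⟩ := exists_pressure_sum_lt hlam hp hα hP
      (show sInf (P '' Set.Iio 0) < t + 1 / ((j : ℝ) + 1) by linarith)
    obtain ⟨m, hm, hae⟩ := exists_lengths hN hp hpsum hμ hα hℓmono hℓ ha haα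
    filter_upwards [hae] with o ho
    refine le_trans (dimH_mono ?_)
      (dimH_rare_le hlam hp hf hπ hΛc.isBounded hmem (by linarith) hq hsum hm)
    rintro z ⟨hz, hzR⟩
    obtain ⟨x, rfl⟩ := coding_surj hlam hf hπ hΛc.isBounded hΛ hz
    exact ⟨x, ho x fun hx => hzR ⟨x, hx, rfl⟩, rfl⟩
  have hlower : ∀ j : ℕ, ∀ᵐ o ∂μ,
      ENNReal.ofReal (t - 1 / ((j : ℝ) + 1)) ≤ dimH (Λ \ π '' limsupCylinders ℓ o) := by
    intro j
    have hj : 0 < 1 / ((j : ℝ) + 1) := Nat.one_div_pos_of_nat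
    rcases le_or_gt (t - 1 / ((j : ℝ) + 1)) 0 with h0 | h0
    · exact Eventually.of_forall fun o => by
        rw [ENNReal.ofReal_of_nonpos h0]
        exact bot_le
    · exact ae_le_dimH hlam hp hpsum hf hΛne hΛc hΛ hUne hUo hUb hUsub hUdisj hπ hμ hα hℓ hX h0
        (one_lt_pressure_sum hlam hp hP hX (by linarith))
  have hlim := tendsto_one_div_add_atTop_nhds_zero_nat (𝕜 := ℝ)
  filter_upwards [ae_all_iff.2 hupper, ae_all_iff.2 hlower] with o ho1 ho2
  refine le_antisymm ?_ ?_
  · refine ge_of_tendsto' (x := atTop) ?_ ho1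
    simpa using ENNReal.tendsto_ofReal (hlim.const_add t)
  · refine le_of_tendsto' (x := atTop) ?_ ho2
    simpa using ENNReal.tendsto_ofReal (hlim.const_sub t)
end
end

section
/- For every α > 0 the infimum inf_{q∈[0,1]} P_α(q) is given by: (i) P_α(1) if α ≤ −Σ_{i=1}^N λ_i^{P_α(1)} p_i e^α log p_i; (ii) inf_{q∈ℝ} P_α(q) if −Σ_{i=1}^N λ_i^{P_α(1)} p_i e^α log p_i < α < −Σ_{i=1}^N λ_i^{s₀} log p_i; (iii) P_α(0) = s₀ otherwise (i.e. if α ≥ −Σ_{i=1}^N λ_i^{s₀} log p_i). Moreover, the map α ↦ inf_{q∈[0,1]} P_α(q) is continuous on (0,∞), and inf_{q∈[0,1]} P_α(q) < s₀ whenever α < −Σ_{i=1}^N λ_i^{s₀} log p_i. -/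
/-!
Write `u i = log (lam i) < 0` and `w i = lam i ^ P a q * (p i * exp a) ^ q`, a probability vector.
Expanding the defining equation at `(b, r)` around `(a, q)` and using `1 + x ≤ exp x` gives
`(P b r - P a q) * ∑ w i * u i + ∑ w i * (r * (log (p i) + b) - q * (log (p i) + a)) ≤ 0`
(`pressure_tangent`). For `b = a` this is the supporting line of the convex function `P a` at `q`,
whose slope has the sign of `a + ∑ w i * log (p i)`; the three regimes compare the sign of this
slope at `q = 0` and `q = 1`. For `r = q ∈ [0,1]` the same inequality shows that `a ↦ P a q` is
Lipschitz with a constant independent of `q`, so the infimum over `q ∈ [0,1]` is Lipschitz in `a`.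
Finally, a negative slope at `q = 0` makes `∑ lam i ^ s0 * (p i * exp a) ^ q` drop below `1` for
small `q > 0`, which forces `P a q < s0`.
-/

open MeasureTheory Filter Topology Set ENNReal

noncomputable section

/-- The first-order lower bound for the implicit function `P`, jointly in both arguments. -/
lemma pressure_tangent {N : ℕ} (lam p : Fin N → ℝ)
    (hlam : ∀ i, lam i ∈ Set.Ioo (0 : ℝ) 1) (hp : ∀ i, 0 < p i)
    (P : ℝ → ℝ → ℝ)
    (hP : ∀ a q : ℝ, ∑ i, lam i ^ P a q * (p i * Real.exp a) ^ q = 1) (a q b r : ℝ) :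
    (P b r - P a q) * ∑ i, lam i ^ P a q * (p i * Real.exp a) ^ q * Real.log (lam i)
      + ∑ i, lam i ^ P a q * (p i * Real.exp a) ^ q *
          (r * (Real.log (p i) + b) - q * (Real.log (p i) + a)) ≤ 0 := by
  have key : ∀ i, lam i ^ P a q * (p i * Real.exp a) ^ q
      * (1 + (P b r - P a q) * Real.log (lam i)
        + (r * (Real.log (p i) + b) - q * (Real.log (p i) + a)))
      ≤ lam i ^ P b r * (p i * Real.exp b) ^ r := by
    intro i
    have hl := (hlam i).1
    have form : ∀ c s t : ℝ, lam i ^ t * (p i * Real.exp c) ^ s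
        = Real.exp (t * Real.log (lam i) + s * (Real.log (p i) + c)) := by
      intro c s t
      rw [Real.rpow_def_of_pos hl, Real.rpow_def_of_pos (mul_pos (hp i) (Real.exp_pos c)),
        Real.log_mul (hp i).ne' (Real.exp_pos c).ne', Real.log_exp, ← Real.exp_add]
      ring_nf
    rw [form, form]
    calc _ ≤ Real.exp (P a q * Real.log (lam i) + q * (Real.log (p i) + a))
          * Real.exp ((P b r - P a q) * Real.log (lam i)
            + (r * (Real.log (p i) + b) - q * (Real.log (p i) + a))) := by
          apply mul_le_mul_of_nonneg_left _ (Real.exp_pos _).le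
          linarith [Real.add_one_le_exp ((P b r - P a q) * Real.log (lam i)
            + (r * (Real.log (p i) + b) - q * (Real.log (p i) + a)))]
      _ = _ := by rw [← Real.exp_add]; ring_nf
  have hsum := Finset.sum_le_sum (fun i (_ : i ∈ Finset.univ) => key i)
  rw [hP b r] at hsum
  have e : ∑ i, lam i ^ P a q * (p i * Real.exp a) ^ q
      * (1 + (P b r - P a q) * Real.log (lam i)
        + (r * (Real.log (p i) + b) - q * (Real.log (p i) + a)))
      = 1 + ((P b r - P a q) * ∑ i, lam i ^ P a q * (p i * Real.exp a) ^ q * Real.log (lam i)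
      + ∑ i, lam i ^ P a q * (p i * Real.exp a) ^ q *
          (r * (Real.log (p i) + b) - q * (Real.log (p i) + a))) := by
    rw [← hP a q, Finset.mul_sum, ← Finset.sum_add_distrib, ← Finset.sum_add_distrib]
    rw [hP a q]
    exact Finset.sum_congr rfl fun i _ => by ring
  linarith

/-- The weighted means of `log (lam i)` are bounded above by one negative constant. -/
lemma exists_log_mean_le {N : ℕ} [NeZero N] (lam p : Fin N → ℝ)
    (hlam : ∀ i, lam i ∈ Set.Ioo (0 : ℝ) 1) (hp : ∀ i, 0 < p i)
    (P : ℝ → ℝ → ℝ)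
    (hP : ∀ a q : ℝ, ∑ i, lam i ^ P a q * (p i * Real.exp a) ^ q = 1) :
    ∃ c : ℝ, 0 < c ∧ ∀ a q,
      ∑ i, lam i ^ P a q * (p i * Real.exp a) ^ q * Real.log (lam i) ≤ -c := by
  obtain ⟨j, hj⟩ := Finite.exists_max lam
  refine ⟨-Real.log (lam j), neg_pos.2 (Real.log_neg (hlam j).1 (hlam j).2), fun a q => ?_⟩
  calc _ ≤ ∑ i, lam i ^ P a q * (p i * Real.exp a) ^ q * Real.log (lam j) := by
        refine Finset.sum_le_sum fun i _ => mul_le_mul_of_nonneg_left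
          (Real.log_le_log (hlam i).1 (hj i)) ?_
        have := (hlam i).1
        have := hp i
        positivity
    _ = _ := by rw [← Finset.sum_mul, hP]; ring

/-- The supporting line of `P a` at `q`, with `-κ` the mean of `log (lam i)`. -/
lemma exists_supporting_line {N : ℕ} [NeZero N] (lam p : Fin N → ℝ)
    (hlam : ∀ i, lam i ∈ Set.Ioo (0 : ℝ) 1) (hp : ∀ i, 0 < p i)
    (P : ℝ → ℝ → ℝ)
    (hP : ∀ a q : ℝ, ∑ i, lam i ^ P a q * (p i * Real.exp a) ^ q = 1) (a q : ℝ) :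
    ∃ κ : ℝ, 0 < κ ∧ ∀ r,
      (r - q) * (a + ∑ i, lam i ^ P a q * (p i * Real.exp a) ^ q * Real.log (p i))
        ≤ (P a r - P a q) * κ := by
  obtain ⟨c, hc, hU⟩ := exists_log_mean_le lam p hlam hp P hP
  refine ⟨-∑ i, lam i ^ P a q * (p i * Real.exp a) ^ q * Real.log (lam i),
    by linarith [hU a q], fun r => ?_⟩
  have h := pressure_tangent lam p hlam hp P hP a q a r
  have e : ∑ i, lam i ^ P a q * (p i * Real.exp a) ^ q *
          (r * (Real.log (p i) + a) - q * (Real.log (p i) + a))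
      = (r - q) * (a * ∑ i, lam i ^ P a q * (p i * Real.exp a) ^ q
        + ∑ i, lam i ^ P a q * (p i * Real.exp a) ^ q * Real.log (p i)) := by
    rw [Finset.mul_sum, ← Finset.sum_add_distrib, Finset.mul_sum]
    exact Finset.sum_congr rfl fun i _ => by ring
  rw [e, hP, mul_one] at h
  linarith

/-- `a ↦ P a q` is Lipschitz, uniformly in `q ∈ [0,1]`. -/
lemma exists_uniform_lipschitz {N : ℕ} [NeZero N] (lam p : Fin N → ℝ)
    (hlam : ∀ i, lam i ∈ Set.Ioo (0 : ℝ) 1) (hp : ∀ i, 0 < p i)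
    (P : ℝ → ℝ → ℝ)
    (hP : ∀ a q : ℝ, ∑ i, lam i ^ P a q * (p i * Real.exp a) ^ q = 1) :
    ∃ K : ℝ, 0 ≤ K ∧ ∀ a b, ∀ q ∈ Set.Icc (0 : ℝ) 1, P b q ≤ P a q + K * |b - a| := by
  obtain ⟨c, hc, hU⟩ := exists_log_mean_le lam p hlam hp P hP
  refine ⟨c⁻¹, by positivity, fun a b q hq => ?_⟩
  have h := pressure_tangent lam p hlam hp P hP b q a q
  have e : ∑ i, lam i ^ P b q * (p i * Real.exp b) ^ q *
          (q * (Real.log (p i) + a) - q * (Real.log (p i) + b))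
      = q * (a - b) := by
    rw [← mul_one (q * (a - b)), ← hP b q, Finset.mul_sum]
    exact Finset.sum_congr rfl fun i _ => by ring
  rw [e] at h
  have hu := hU b q
  set U := ∑ i, lam i ^ P b q * (p i * Real.exp b) ^ q * Real.log (lam i)
  by_contra! hcon
  have hqa : q * (b - a) ≤ |b - a| :=
    (mul_le_mul_of_nonneg_left (le_abs_self _) hq.1).trans
      (mul_le_of_le_one_left (abs_nonneg _) hq.2)
  have hd : c⁻¹ * |b - a| < P b q - P a q := by linarith
  have hd0 : 0 ≤ c⁻¹ * |b - a| := by positivity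
  have h1 : |b - a| < c * (P b q - P a q) := by
    rwa [inv_mul_lt_iff₀ hc] at hd
  nlinarith

/-- Comparison of the pressure with `s`: the defining sum is strictly decreasing in the exponent. -/
lemma pressure_lt_of_sum_lt_one {N : ℕ} (lam p : Fin N → ℝ)
    (hlam : ∀ i, lam i ∈ Set.Ioo (0 : ℝ) 1) (hp : ∀ i, 0 < p i)
    (P : ℝ → ℝ → ℝ)
    (hP : ∀ a q : ℝ, ∑ i, lam i ^ P a q * (p i * Real.exp a) ^ q = 1) {a q s : ℝ}
    (h : ∑ i, lam i ^ s * (p i * Real.exp a) ^ q < 1) : P a q < s := by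
  by_contra! hcon
  have : ∑ i, lam i ^ P a q * (p i * Real.exp a) ^ q
      ≤ ∑ i, lam i ^ s * (p i * Real.exp a) ^ q := by
    refine Finset.sum_le_sum fun i _ => mul_le_mul_of_nonneg_right
      (Real.rpow_le_rpow_of_exponent_ge (hlam i).1 (hlam i).2.le hcon) ?_
    have := hp i
    positivity
  linarith [hP a q]

/-- A negative derivative at `q = 0` produces a value below `s0` inside `[0,1]`. -/
lemma exists_pressure_lt {N : ℕ} (lam p : Fin N → ℝ)
    (hlam : ∀ i, lam i ∈ Set.Ioo (0 : ℝ) 1) (hp : ∀ i, 0 < p i)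
    (s0 : ℝ) (hs0 : ∑ i, lam i ^ s0 = 1) (P : ℝ → ℝ → ℝ)
    (hP : ∀ a q : ℝ, ∑ i, lam i ^ P a q * (p i * Real.exp a) ^ q = 1) {a : ℝ}
    (ha : a < -∑ i, lam i ^ s0 * Real.log (p i)) : ∃ q ∈ Set.Icc (0 : ℝ) 1, P a q < s0 := by
  have hd : HasDerivAt (fun q : ℝ => ∑ i, lam i ^ s0 * (p i * Real.exp a) ^ q)
      (∑ i, lam i ^ s0 * (Real.log (p i) + a)) 0 := by
    refine HasDerivAt.fun_sum fun i _ => ?_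
    have hpos : 0 < p i * Real.exp a := mul_pos (hp i) (Real.exp_pos a)
    have h := ((Real.hasStrictDerivAt_const_rpow hpos 0).hasDerivAt).const_mul (lam i ^ s0)
    rw [Real.rpow_zero, one_mul, Real.log_mul (hp i).ne' (Real.exp_pos a).ne',
      Real.log_exp] at h
    exact h
  have hneg : ∑ i, lam i ^ s0 * (Real.log (p i) + a) < 0 := by
    simp only [mul_add, Finset.sum_add_distrib, ← Finset.sum_mul, hs0]
    linarith
  have hev := ((hasDerivWithinAt_iff_tendsto_slope' (s := Set.Ioi (0 : ℝ)) (by simp)).1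
    hd.hasDerivWithinAt).eventually_lt_const hneg
  have hev2 : ∀ᶠ q : ℝ in 𝓝[>] 0, q ∈ Set.Ioc (0 : ℝ) 1 := Ioc_mem_nhdsGT one_pos
  obtain ⟨q, h1, h2⟩ := (hev.and hev2).exists
  refine ⟨q, ⟨h2.1.le, h2.2⟩, pressure_lt_of_sum_lt_one lam p hlam hp P hP ?_⟩
  rw [slope_def_field, sub_zero, div_lt_iff₀ h2.1, zero_mul] at h1
  simp only [Real.rpow_zero, mul_one, hs0] at h1
  linarith

/-- The three regimes of `inf_(q ∈ [0,1]) P_α(q)`, its continuity in `α` on `(0,∞)`,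
and strict inequality `inf_(q ∈ [0,1]) P_α(q) < s₀` when `α < −Σ λ_i^(s₀) log p_i`. -/
theorem inf_pressure_on_unit_interval {N : ℕ} [NeZero N] (hN : 2 ≤ N)
    (lam p : Fin N → ℝ)
    (hlam : ∀ i, lam i ∈ Set.Ioo (0 : ℝ) 1)
    (hp : ∀ i, 0 < p i) (hpsum : ∑ i, p i = 1)
    (s0 : ℝ) (hs0 : ∑ i, lam i ^ s0 = 1)
    (P : ℝ → ℝ → ℝ)
    (hP : ∀ a q : ℝ, ∑ i, lam i ^ P a q * (p i * Real.exp a) ^ q = 1) :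
    (∀ a : ℝ, 0 < a →
      a ≤ -∑ i, lam i ^ P a 1 * (p i * Real.exp a) * Real.log (p i) →
      sInf (P a '' Set.Icc 0 1) = P a 1) ∧
    (∀ a : ℝ, 0 < a →
      -∑ i, lam i ^ P a 1 * (p i * Real.exp a) * Real.log (p i) < a →
      a < -∑ i, lam i ^ s0 * Real.log (p i) →
      sInf (P a '' Set.Icc 0 1) = sInf (Set.range (P a))) ∧
    (∀ a : ℝ, 0 < a → -∑ i, lam i ^ s0 * Real.log (p i) ≤ a →
      P a 0 = s0 ∧ sInf (P a '' Set.Icc 0 1) = s0) ∧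
    ContinuousOn (fun a => sInf (P a '' Set.Icc 0 1)) (Set.Ioi 0) ∧
    (∀ a : ℝ, 0 < a → a < -∑ i, lam i ^ s0 * Real.log (p i) →
      sInf (P a '' Set.Icc 0 1) < s0) := by
  have hP0 : ∀ a, P a 0 = s0 := by
    intro a
    have h := hP a 0
    simp only [Real.rpow_zero, mul_one] at h
    have hanti : StrictAnti fun t : ℝ => ∑ i, lam i ^ t := fun s t hst =>
      Finset.sum_lt_sum_of_nonempty Finset.univ_nonempty fun i _ =>
        Real.rpow_lt_rpow_of_exponent_gt (hlam i).1 (hlam i).2 hst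
    exact hanti.injective (h.trans hs0.symm)
  have line0 : ∀ a, ∃ κ : ℝ, 0 < κ ∧ ∀ r,
      r * (a + ∑ i, lam i ^ s0 * Real.log (p i)) ≤ (P a r - s0) * κ := by
    intro a
    simpa [hP0] using exists_supporting_line lam p hlam hp P hP a 0
  have line1 : ∀ a, ∃ κ : ℝ, 0 < κ ∧ ∀ r,
      (r - 1) * (a + ∑ i, lam i ^ P a 1 * (p i * Real.exp a) * Real.log (p i))
        ≤ (P a r - P a 1) * κ := by
    intro a
    simpa using exists_supporting_line lam p hlam hp P hP a 1
  have hbdd : ∀ a, BddBelow (P a '' Set.Icc 0 1) := by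
    intro a
    obtain ⟨κ, hκ, hl⟩ := line0 a
    refine ⟨s0 - |a + ∑ i, lam i ^ s0 * Real.log (p i)| / κ, ?_⟩
    rintro _ ⟨r, hr, rfl⟩
    have h := hl r
    set V := a + ∑ i, lam i ^ s0 * Real.log (p i)
    have hV : -|V| ≤ r * V := by
      nlinarith [neg_abs_le V, abs_nonneg V, hr.1, hr.2]
    have : -|V| / κ ≤ P a r - s0 := by
      rw [div_le_iff₀ hκ]; linarith
    rw [neg_div] at this
    linarith
  have hne : ∀ a, (P a '' Set.Icc 0 1).Nonempty := fun a => ⟨_, 0, by simp, rfl⟩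
  have hle : ∀ a, ∀ q ∈ Set.Icc (0 : ℝ) 1, sInf (P a '' Set.Icc 0 1) ≤ P a q :=
    fun a q hq => csInf_le (hbdd a) ⟨q, hq, rfl⟩
  refine ⟨?_, ?_, ?_, ?_, ?_⟩
  · intro a _ h
    refine le_antisymm (hle a 1 (by simp)) (le_csInf (hne a) ?_)
    rintro _ ⟨r, hr, rfl⟩
    obtain ⟨κ, hκ, hl⟩ := line1 a
    have h1 := hl r
    have h2 := mul_nonneg_of_nonpos_of_nonpos (sub_nonpos.2 hr.2)
      (show a + ∑ i, lam i ^ P a 1 * (p i * Real.exp a) * Real.log (p i) ≤ 0 by linarith)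
    exact sub_nonneg.1 (nonneg_of_mul_nonneg_left (h2.trans h1) hκ)
  · intro a _ h h'
    obtain ⟨κ₀, hκ₀, hl₀⟩ := line0 a
    obtain ⟨κ₁, hκ₁, hl₁⟩ := line1 a
    -- Outside `[0,1]` the supporting lines at the endpoints bound `P a` by its endpoint values.
    have hall : ∀ q, sInf (P a '' Set.Icc 0 1) ≤ P a q := by
      intro q
      rcases le_total q 0 with hq | hq
      · have h2 := mul_nonneg_of_nonpos_of_nonpos hq
          (show a + ∑ i, lam i ^ s0 * Real.log (p i) ≤ 0 by linarith)
        have h3 := sub_nonneg.1 (nonneg_of_mul_nonneg_left (h2.trans (hl₀ q)) hκ₀)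
        have := hle a 0 (by simp)
        rw [hP0] at this
        exact this.trans h3
      · rcases le_total q 1 with hq1 | hq1
        · exact hle a q ⟨hq, hq1⟩
        · have h2 := mul_nonneg (sub_nonneg.2 hq1)
            (show 0 ≤ a + ∑ i, lam i ^ P a 1 * (p i * Real.exp a) * Real.log (p i) by linarith)
          have h3 := sub_nonneg.1 (nonneg_of_mul_nonneg_left (h2.trans (hl₁ q)) hκ₁)
          exact (hle a 1 (by simp)).trans h3
    refine le_antisymm (le_csInf (Set.range_nonempty _) ?_) ?_
    · rintro _ ⟨q, rfl⟩
      exact hall q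
    · refine csInf_le_csInf ⟨sInf (P a '' Set.Icc 0 1), ?_⟩ (hne a) (Set.image_subset_range _ _)
      rintro _ ⟨q, rfl⟩
      exact hall q
  · intro a _ h
    refine ⟨hP0 a, le_antisymm ((hle a 0 (by simp)).trans_eq (hP0 a)) (le_csInf (hne a) ?_)⟩
    rintro _ ⟨r, hr, rfl⟩
    obtain ⟨κ, hκ, hl⟩ := line0 a
    have h2 := mul_nonneg hr.1
      (show 0 ≤ a + ∑ i, lam i ^ s0 * Real.log (p i) by linarith)
    exact sub_nonneg.1 (nonneg_of_mul_nonneg_left (h2.trans (hl r)) hκ)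
  · obtain ⟨K, hK, hlip⟩ := exists_uniform_lipschitz lam p hlam hp P hP
    have hL : LipschitzWith ⟨K, hK⟩ fun a => sInf (P a '' Set.Icc 0 1) := by
      refine LipschitzWith.of_le_add_mul _ fun b a => ?_
      rw [← sub_le_iff_le_add]
      refine le_csInf (hne a) ?_
      rintro _ ⟨q, hq, rfl⟩
      rw [sub_le_iff_le_add]
      exact (hle b q hq).trans (hlip a b q hq)
    exact hL.continuous.continuousOn
  · intro a _ h
    obtain ⟨q, hq, hlt⟩ := exists_pressure_lt lam p hlam hp s0 hs0 P hP h
    exact (hle a q hq).trans_lt hlt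
end
end
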